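/- Let G = (V, E) be a simple connected graph on |V| = N vertices, let I(k) denote the number of spanning forests of G with k edges, and let k be an integer with 1 ≤ k ≤ N − 2. Then I(k)² ≥ (1 + 1/k)·(1 + 1/(C(N−k+1, 2) − 1))·I(k−1)·I(k+1), where C(N−k+1, 2) is the binomial coefficient; moreover, the inequality is strict whenever 1 < k < N − 2. -/

import Mathlib

open scoped Classical BigOperators

noncomputable section

/-- The number of spanning forests with `k` edges of a simple graph `G`:
sets of `k` edges of `G` that contain no cycle. -/
def numForests (V : Type*) [Fintype V] [DecidableEq V] (G : SimpleGraph V) (k : ℕ) : ℕ :=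
  (Finset.univ.filter (fun F : Finset (Sym2 V) =>
    (F : Set (Sym2 V)) ⊆ G.edgeSet ∧ F.card = k ∧
      (SimpleGraph.fromEdgeSet (F : Set (Sym2 V))).IsAcyclic)).card

/-!
For each `m`, the numbers of `m`-element faces of the links of pairs of edges form a symmetric
matrix `M`, bordered by the corresponding counts for single edges and for the empty set. The
inequality says that the quadratic form of `M` satisfies the reverse Cauchy–Schwarz inequality at
two particular vectors, i.e. that `M` has at most one positive eigenvalue. Up to a factor, the form
of `M` is the sum of the forms at level `m - 1` of the contractions by one edge, so this spectral
property passes from the contractions to the whole, via a connectedness argument as in Oppenheim's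
trickle-down theorem and in Chan and Pak's combinatorial atlases.

At the bottom level, the contraction by a forest with `m` edges is a multigraph on `N - m` vertices,
whose edges fall into at most `C(N - m, 2)` parallel classes. There the form is computed explicitly,
and the inequality reduces to the Cauchy–Schwarz inequality over the parallel classes. This is where
the binomial coefficient comes from.

Equality propagates down to every contraction, where equality in Cauchy–Schwarz forces all parallel
classes to have the same size. If this held for the contractions by all forests with `m ≥ 1` edges,
then one more contraction could never merge classes of a multigraph with at least five vertices
consistently.
-/

open Matrix

section Spectral

variable {E : Type*} [NormedAddCommGroup E] [InnerProductSpace ℝ E] [FiniteDimensional ℝ E]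

open scoped RealInnerProductSpace

lemma mem_range_of_forall_ker_inner_eq_zero {T : E →ₗ[ℝ] E} (hT : T.IsSymmetric) {b : E}
    (hb : ∀ x, T x = 0 → ⟪x, b⟫ = 0) : ∃ u, T u = b := by
  have hmem : b ∈ (LinearMap.range T)ᗮᗮ := by
    rw [hT.orthogonal_range]
    exact fun x hx => hb x (LinearMap.mem_ker.1 hx)
  rwa [Submodule.orthogonal_orthogonal] at hmem

lemma inner_apply_self_nonpos_of_orthogonal_eigenvectors {T : E →ₗ[ℝ] E} (hT : T.IsSymmetric)
    (hle : ∀ x, ⟪T x, x⟫ ≤ ‖T x‖ ^ 2) {u : E}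
    (hu : ∀ x, ∀ μ : ℝ, 1 ≤ μ → T x = μ • x → ⟪x, u⟫ = 0) :
    ⟪T u, u⟫ ≤ 0 ∧ (⟪T u, u⟫ = 0 → T u = 0) := by
  set v := hT.eigenvectorBasis rfl
  set μ := hT.eigenvalues rfl
  have hTv : ∀ i, T (v i) = μ i • v i := fun i => hT.apply_eigenvectorBasis rfl i
  have hμ : ∀ i, μ i ≤ 0 ∨ 1 ≤ μ i := by
    intro i
    have hi := hle (v i)
    simp only [hTv, real_inner_smul_left, real_inner_self_eq_norm_sq, norm_smul, v.norm_eq_one,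
      Real.norm_eq_abs, sq_abs, one_pow, mul_one] at hi
    by_contra! hlt
    nlinarith
  have hcoord : ∀ i, ⟪v i, T u⟫ = μ i * ⟪v i, u⟫ := fun i => by
    rw [← hT, hTv, real_inner_smul_left]
  have hterm : ∀ i, μ i * ⟪v i, u⟫ ^ 2 ≤ 0 := by
    intro i
    rcases hμ i with h | h
    · exact mul_nonpos_of_nonpos_of_nonneg h (sq_nonneg _)
    · rw [hu (v i) (μ i) h (hTv i)]; simp
  have hsum : ⟪T u, u⟫ = ∑ i, μ i * ⟪v i, u⟫ ^ 2 := by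
    rw [← v.sum_inner_mul_inner]
    refine Finset.sum_congr rfl fun i _ => ?_
    rw [real_inner_comm, hcoord]; ring
  refine ⟨hsum ▸ Finset.sum_nonpos fun i _ => hterm i, fun h0 => ?_⟩
  rw [hsum, Finset.sum_eq_zero_iff_of_nonpos fun i _ => hterm i] at h0
  rw [← v.sum_repr' (T u)]
  refine Finset.sum_eq_zero fun i _ => ?_
  have hi := h0 i (Finset.mem_univ i)
  have hi' : μ i * ⟪v i, u⟫ = 0 := by simpa using hi
  rw [hcoord, hi', zero_smul]

/-- Correct `y` by an element of the range of `C` to kill `D y`. -/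
lemma bilin_self_nonpos_of_orthogonal_eigenvectors {Y : Type*} [AddCommGroup Y] [Module ℝ Y]
    {q : LinearMap.BilinForm ℝ Y} (hq : q.IsSymm) {C : E →ₗ[ℝ] Y} {D : Y →ₗ[ℝ] E}
    (hCD : ∀ x y, ⟪x, D y⟫ = q (C x) y) (hle : ∀ y, q y y ≤ ‖D y‖ ^ 2) {y : Y}
    (hy : ∀ x, ∀ μ : ℝ, 1 ≤ μ → D (C x) = μ • x → ⟪x, D y⟫ = 0) :
    q y y ≤ 0 ∧ (q y y = 0 → D y = 0) := by
  have hT : (D ∘ₗ C).IsSymmetric := fun x z => by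
    simp only [LinearMap.comp_apply]
    rw [real_inner_comm, hCD, hCD, hq.eq]
  have hker : ∀ x, (D ∘ₗ C) x = 0 → ⟪x, D y⟫ = 0 := by
    intro x hx
    by_contra hne
    set t := (‖D y‖ ^ 2 - q y y + 1) / (2 * ⟪x, D y⟫) with ht
    have hline : q (y + t • C x) (y + t • C x) = q y y + 2 * t * ⟪x, D y⟫ := by
      have h1 : q (C x) y = ⟪x, D y⟫ := (hCD x y).symm
      have h2 : q y (C x) = ⟪x, D y⟫ := by rw [← h1, ← hq.eq y]
      have h3 : q (C x) (C x) = 0 := by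
        rw [← hCD, show D (C x) = 0 from hx, inner_zero_right]
      simp only [map_add, map_smul, LinearMap.add_apply, LinearMap.smul_apply, smul_eq_mul, h1,
        h2, h3]
      ring
    have hbound := hle (y + t • C x)
    rw [hline, map_add, map_smul, show D (C x) = 0 from hx, smul_zero, add_zero] at hbound
    have : 2 * t * ⟪x, D y⟫ = ‖D y‖ ^ 2 - q y y + 1 := by rw [ht]; field_simp
    linarith
  obtain ⟨u, hu⟩ := mem_range_of_forall_ker_inner_eq_zero hT hker
  simp only [LinearMap.comp_apply] at hu
  have hcorr : q (y - C u) (y - C u) ≤ 0 := by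
    simpa [hu] using hle (y - C u)
  have hsplit : q y y = q (y - C u) (y - C u) + ⟪D (C u), u⟫ := by
    have h1 : q (C u) y = ⟪u, D y⟫ := (hCD u y).symm
    have h2 : q y (C u) = ⟪u, D y⟫ := by rw [← h1, ← hq.eq y]
    have h3 : q (C u) (C u) = ⟪u, D y⟫ := by rw [← hu, hCD]
    rw [real_inner_comm, hu]
    simp only [map_sub, LinearMap.sub_apply, h1, h2, h3]; ring
  obtain ⟨hneg, heq⟩ := inner_apply_self_nonpos_of_orthogonal_eigenvectors hT (u := u)
    (fun x => by simpa [real_inner_comm, hCD] using hle (C x)) fun x μ hμ hx => by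
      have h := hy x μ hμ hx
      rw [← hu] at h
      have h2 := hT x u
      simp only [LinearMap.comp_apply] at h2 hx
      rw [h, hx, real_inner_smul_left] at h2
      exact (mul_eq_zero.1 h2).resolve_left (by positivity)
  simp only [LinearMap.comp_apply] at hneg heq
  exact ⟨by linarith, fun h0 => hu ▸ heq (by linarith)⟩

end Spectral

section Hyperbolic

variable {ι : Type*} [Fintype ι]

/-- The reverse Cauchy–Schwarz inequality for the quadratic form of `M` at the vector `w`. For
symmetric `M` with `0 < w ⬝ᵥ M *ᵥ w` it says that `M` has exactly one positive eigenvalue. -/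
def IsHyperbolicAt (M : Matrix ι ι ℝ) (w : ι → ℝ) : Prop :=
  ∀ y, (w ⬝ᵥ M *ᵥ w) * (y ⬝ᵥ M *ᵥ y) ≤ (w ⬝ᵥ M *ᵥ y) ^ 2

/-- The case of equality, at the vector `y`, in `IsHyperbolicAt M w`. -/
def IsTightAt (M : Matrix ι ι ℝ) (w y : ι → ℝ) : Prop :=
  (w ⬝ᵥ M *ᵥ w) * (y ⬝ᵥ M *ᵥ y) = (w ⬝ᵥ M *ᵥ y) ^ 2

lemma dotProduct_mulVec_comm_of_isSymm {M : Matrix ι ι ℝ} (hM : M.IsSymm) (x y : ι → ℝ) :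
    x ⬝ᵥ M *ᵥ y = y ⬝ᵥ M *ᵥ x := by
  rw [Matrix.dotProduct_mulVec, ← Matrix.mulVec_transpose, hM.eq, dotProduct_comm]

lemma dotProduct_mulVec_add_smul {M : Matrix ι ι ℝ} (hM : M.IsSymm) (y w : ι → ℝ) (t : ℝ) :
    (y + t • w) ⬝ᵥ M *ᵥ (y + t • w) =
      y ⬝ᵥ M *ᵥ y + 2 * t * (w ⬝ᵥ M *ᵥ y) + t ^ 2 * (w ⬝ᵥ M *ᵥ w) := by
  simp only [Matrix.mulVec_add, Matrix.mulVec_smul, dotProduct_add, add_dotProduct,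
    smul_dotProduct, dotProduct_smul, smul_eq_mul, dotProduct_mulVec_comm_of_isSymm hM y w]
  ring

lemma IsHyperbolicAt.of_nonpos_on_ker {M : Matrix ι ι ℝ} (hM : M.IsSymm) (ℓ : (ι → ℝ) →ₗ[ℝ] ℝ)
    (hℓ : ∀ y, ℓ y = 0 → y ⬝ᵥ M *ᵥ y ≤ 0) {w : ι → ℝ} (hw : 0 ≤ w ⬝ᵥ M *ᵥ w) :
    IsHyperbolicAt M w := by
  intro y
  rcases hw.eq_or_lt with h0 | hpos
  · rw [← h0, zero_mul]; positivity
  have hℓw : ℓ w ≠ 0 := fun h => hpos.not_ge (hℓ w h)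
  have hproj := hℓ (y + (-(ℓ y / ℓ w)) • w) (by simp [hℓw])
  rw [dotProduct_mulVec_add_smul hM] at hproj
  nlinarith [sq_nonneg (ℓ y / ℓ w * (w ⬝ᵥ M *ᵥ w) - w ⬝ᵥ M *ᵥ y),
    mul_nonneg hpos.le (sub_nonneg.2 hproj)]

lemma sum_sum_mul_sub_sq {K : Matrix ι ι ℝ} (hK : K.IsSymm) (g : ι → ℝ) :
    ∑ i, ∑ j, K i j * (g i - g j) ^ 2 = 2 * ∑ i, g i * ((∑ j, K i j) * g i - (K *ᵥ g) i) := by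
  have hrow : ∑ i, ∑ j, K i j * g j ^ 2 = ∑ i, ∑ j, K i j * g i ^ 2 := by
    rw [Finset.sum_comm]
    simp only [hK.apply]
  have hexpand : ∀ i j, K i j * (g i - g j) ^ 2 =
      K i j * g i ^ 2 + K i j * g j ^ 2 - 2 * (g i * (K i j * g j)) := fun i j => by ring
  simp only [hexpand, Finset.sum_sub_distrib, Finset.sum_add_distrib, hrow, ← Finset.mul_sum,
    mul_sub, mulVec, dotProduct, ← Finset.sum_mul]
  have hsq : ∀ i, (∑ j, K i j) * g i ^ 2 = g i * ((∑ j, K i j) * g i) := fun i => by ring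
  simp only [hsq]
  ring

lemma eq_of_mulVec_eq_smul_rowSum {K : Matrix ι ι ℝ} (hK : K.IsSymm) (hK0 : ∀ i j, 0 ≤ K i j)
    {g : ι → ℝ} {μ : ℝ} (hμ : 1 ≤ μ) (hg : ∀ i, (K *ᵥ g) i = μ * ((∑ j, K i j) * g i))
    {i j : ι} (hij : Relation.ReflTransGen (fun i j => K i j ≠ 0) i j) : g i = g j := by
  have hterm : ∀ i j, 0 ≤ K i j * (g i - g j) ^ 2 := fun i j =>
    mul_nonneg (hK0 i j) (sq_nonneg _)
  have hrow : ∀ i, 0 ≤ ∑ j, K i j * (g i - g j) ^ 2 := fun i =>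
    Finset.sum_nonneg fun j _ => hterm i j
  have hdirichlet : ∑ i, ∑ j, K i j * (g i - g j) ^ 2 ≤ 0 := by
    rw [sum_sum_mul_sub_sq hK]
    refine mul_nonpos_of_nonneg_of_nonpos zero_le_two (Finset.sum_nonpos fun i _ => ?_)
    have hmass : 0 ≤ (∑ j, K i j) * g i ^ 2 :=
      mul_nonneg (Finset.sum_nonneg fun j _ => hK0 i j) (sq_nonneg _)
    rw [hg]
    nlinarith
  have hstep : ∀ i j, K i j ≠ 0 → g i = g j := fun i j hij => by
    have hzero : K i j * (g i - g j) ^ 2 ≤ 0 :=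
      ((Finset.single_le_sum (fun j _ => hterm i j) (Finset.mem_univ j)).trans
        (Finset.single_le_sum (fun i _ => hrow i) (Finset.mem_univ i))).trans hdirichlet
    simpa [hij, sub_eq_zero] using le_antisymm hzero (hterm i j)
  induction hij with
  | refl => rfl
  | tail _ hab ih => exact ih.trans (hstep _ _ hab)

end Hyperbolic

section LocalToGlobal

variable {ι : Type*} [Fintype ι]

/-- The conductances `w i * M i j * w j` of a reversible random walk: its stationary measure is
proportional to the degree `w i * (M *ᵥ w) i`. -/
def conductance (M : Matrix ι ι ℝ) (w : ι → ℝ) : Matrix ι ι ℝ := of fun i j => w i * M i j * w j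

/-- The diagonal scaling that turns `M` into the normalized adjacency matrix of the network
`conductance M w`. It is `0` at the indices of degree `0`. -/
def scale (M : Matrix ι ι ℝ) (w : ι → ℝ) (i : ι) : ℝ := w i / √(w i * (M *ᵥ w) i)

lemma rowSum_conductance (M : Matrix ι ι ℝ) (w : ι → ℝ) (i : ι) :
    ∑ j, conductance M w i j = w i * (M *ᵥ w) i := by
  simp only [conductance, of_apply, mul_assoc, ← Finset.mul_sum]
  rfl

lemma conductance_mulVec_div_sqrt (M : Matrix ι ι ℝ) (w x : ι → ℝ) (i : ι) :
    (conductance M w *ᵥ fun j => x j / √(w j * (M *ᵥ w) j)) i =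
      w i * (M *ᵥ (scale M w * x)) i := by
  simp only [conductance, mulVec, dotProduct, of_apply, Pi.mul_apply, scale, Finset.mul_sum]
  exact Finset.sum_congr rfl fun j _ => by ring

/-- The quadratic form of `M` is, up to the factor `m`, the `w`-weighted sum of the forms of its
links `A i`, and these are hyperbolic at `w`. Together with connectedness of the network of `M`
this is what the local-to-global principle `isHyperbolicAt` needs; it abstracts the inductive step
of Chan and Pak's combinatorial atlases. -/
structure IsLocallyHyperbolic (M : Matrix ι ι ℝ) (w : ι → ℝ) (A : ι → Matrix ι ι ℝ) (m : ℝ) :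
    Prop where
  isSymm : M.IsSymm
  nonneg : ∀ i j, 0 ≤ M i j
  weight_nonneg : ∀ i, 0 ≤ w i
  link_isSymm : ∀ i, (A i).IsSymm
  factor_pos : 0 < m
  sum_link : ∀ y, ∑ i, w i * (y ⬝ᵥ A i *ᵥ y) = m * (y ⬝ᵥ M *ᵥ y)
  weight_link : ∀ i, w i ≠ 0 → ∀ y, w ⬝ᵥ A i *ᵥ y = m * (M *ᵥ y) i
  link_hyperbolic : ∀ i, w i ≠ 0 → IsHyperbolicAt (A i) w
  link_eq_zero : ∀ i, w i ≠ 0 → (M *ᵥ w) i = 0 → A i = 0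
  connected : ∀ i j, w i * (M *ᵥ w) i ≠ 0 → w j * (M *ᵥ w) j ≠ 0 →
    Relation.ReflTransGen (fun a b => conductance M w a b ≠ 0) i j

namespace IsLocallyHyperbolic

variable {M : Matrix ι ι ℝ} {w : ι → ℝ} {A : ι → Matrix ι ι ℝ} {m : ℝ}

lemma mulVec_eq_zero (h : IsLocallyHyperbolic M w A m) {i : ι} (hi : w i ≠ 0)
    (hMw : (M *ᵥ w) i = 0) (y : ι → ℝ) : (M *ᵥ y) i = 0 := by
  have := h.weight_link i hi y
  rw [h.link_eq_zero i hi hMw, zero_mulVec, dotProduct_zero] at this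
  exact (mul_eq_zero.1 this.symm).resolve_left h.factor_pos.ne'

lemma mulVec_weight_nonneg (h : IsLocallyHyperbolic M w A m) (i : ι) : 0 ≤ (M *ᵥ w) i :=
  Finset.sum_nonneg fun j _ => mul_nonneg (h.nonneg i j) (h.weight_nonneg j)

lemma degree_nonneg (h : IsLocallyHyperbolic M w A m) (i : ι) : 0 ≤ w i * (M *ᵥ w) i :=
  mul_nonneg (h.weight_nonneg i) (h.mulVec_weight_nonneg i)

lemma link_le (h : IsLocallyHyperbolic M w A m) (y : ι → ℝ) (i : ι) :
    w i * (y ⬝ᵥ A i *ᵥ y) ≤ m * (scale M w i * (M *ᵥ y) i) ^ 2 := by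
  by_cases hi : w i = 0
  · simp [hi, scale]
  by_cases hMw : (M *ᵥ w) i = 0
  · simp [h.link_eq_zero i hi hMw, scale, hMw]
  have hwi : 0 < w i := lt_of_le_of_ne (h.weight_nonneg i) (Ne.symm hi)
  have hdi : 0 < (M *ᵥ w) i := lt_of_le_of_ne (h.mulVec_weight_nonneg i) (Ne.symm hMw)
  have hhyp := h.link_hyperbolic i hi y
  rw [h.weight_link i hi, h.weight_link i hi, mul_pow, mul_assoc, sq m, mul_assoc,
    mul_le_mul_iff_right₀ h.factor_pos] at hhyp
  rw [scale, mul_pow, div_pow, Real.sq_sqrt (h.degree_nonneg i)]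
  have hsimp : m * (w i ^ 2 / (w i * (M *ᵥ w) i) * (M *ᵥ y) i ^ 2) =
      w i * (m * (M *ᵥ y) i ^ 2 / (M *ᵥ w) i) := by
    field_simp
  rw [hsimp]
  refine mul_le_mul_of_nonneg_left ?_ hwi.le
  rwa [le_div_iff₀' hdi]

lemma dotProduct_mulVec_le (h : IsLocallyHyperbolic M w A m) (y : ι → ℝ) :
    y ⬝ᵥ M *ᵥ y ≤ ∑ i, (scale M w i * (M *ᵥ y) i) ^ 2 := by
  rw [← mul_le_mul_iff_right₀ h.factor_pos, ← h.sum_link, Finset.mul_sum]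
  exact Finset.sum_le_sum fun i _ => h.link_le y i

lemma weight_mul_mulVec_eq_zero (h : IsLocallyHyperbolic M w A m) {i : ι}
    (hi : w i * (M *ᵥ w) i = 0) (y : ι → ℝ) : w i * (M *ᵥ y) i = 0 := by
  by_cases hwi : w i = 0
  · rw [hwi, zero_mul]
  · rw [h.mulVec_eq_zero hwi ((mul_eq_zero.1 hi).resolve_left hwi), mul_zero]

lemma exists_scale_mul_eq (h : IsLocallyHyperbolic M w A m) {x : ι → ℝ} {μ : ℝ} (hμ : 1 ≤ μ)
    (hx : ∀ i, scale M w i * (M *ᵥ (scale M w * x)) i = μ * x i) :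
    ∃ γ, ∀ i, w i * (M *ᵥ w) i ≠ 0 → scale M w i * x i = γ * w i := by
  set r : ι → ℝ := fun i => √(w i * (M *ᵥ w) i) with hr
  have hr0 : ∀ i, w i * (M *ᵥ w) i ≠ 0 → r i ≠ 0 := fun i hi h0 =>
    hi ((Real.sqrt_eq_zero (h.degree_nonneg i)).1 h0)
  have hK : (conductance M w).IsSymm := IsSymm.ext fun i j => by
    simp only [conductance, of_apply, h.isSymm.apply i j]; ring
  have hK0 : ∀ i j, 0 ≤ conductance M w i j := fun i j =>
    mul_nonneg (mul_nonneg (h.weight_nonneg i) (h.nonneg i j)) (h.weight_nonneg j)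
  have hg : ∀ i, (conductance M w *ᵥ fun j => x j / r j) i =
      μ * ((∑ j, conductance M w i j) * (x i / r i)) := by
    intro i
    rw [conductance_mulVec_div_sqrt, rowSum_conductance]
    by_cases hi : w i * (M *ᵥ w) i = 0
    · rw [hi, h.weight_mul_mulVec_eq_zero hi]; ring
    · have hw : w i = r i * scale M w i := (mul_div_cancel₀ (w i) (hr0 i hi)).symm
      have hd : w i * (M *ᵥ w) i = r i ^ 2 := (Real.sq_sqrt (h.degree_nonneg i)).symm
      rw [hd, hw, mul_assoc, hx]
      have := hr0 i hi
      field_simp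
  by_cases hsupp : ∃ i₀, w i₀ * (M *ᵥ w) i₀ ≠ 0
  · obtain ⟨i₀, hi₀⟩ := hsupp
    refine ⟨x i₀ / r i₀, fun i hi => ?_⟩
    rw [eq_of_mulVec_eq_smul_rowSum hK hK0 hμ hg (h.connected i₀ i hi₀ hi)]
    simp only [scale, hr]; ring
  · exact ⟨0, fun i hi => absurd ⟨i, hi⟩ hsupp⟩

lemma sum_mul_scale_mul_mulVec_eq_zero (h : IsLocallyHyperbolic M w A m) {x y : ι → ℝ} {μ : ℝ}
    (hμ : 1 ≤ μ) (hx : ∀ i, scale M w i * (M *ᵥ (scale M w * x)) i = μ * x i)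
    (hy : w ⬝ᵥ M *ᵥ y = 0) : ∑ i, x i * (scale M w i * (M *ᵥ y) i) = 0 := by
  obtain ⟨γ, hγ⟩ := h.exists_scale_mul_eq hμ hx
  have hterm : ∀ i, x i * (scale M w i * (M *ᵥ y) i) = γ * (w i * (M *ᵥ y) i) := by
    intro i
    by_cases hi : w i * (M *ᵥ w) i = 0
    · rw [scale, hi, h.weight_mul_mulVec_eq_zero hi]; simp
    · linear_combination (M *ᵥ y) i * hγ i hi
  simp only [hterm, ← Finset.mul_sum]
  rw [show ∑ i, w i * (M *ᵥ y) i = w ⬝ᵥ M *ᵥ y from rfl, hy, mul_zero]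

lemma nonpos_of_dotProduct_eq_zero (h : IsLocallyHyperbolic M w A m) {y : ι → ℝ}
    (hy : w ⬝ᵥ M *ᵥ y = 0) :
    y ⬝ᵥ M *ᵥ y ≤ 0 ∧ (y ⬝ᵥ M *ᵥ y = 0 → ∀ i, scale M w i * (M *ᵥ y) i = 0) := by
  set C : EuclideanSpace ℝ ι →ₗ[ℝ] (ι → ℝ) :=
    LinearMap.mulLeft ℝ (scale M w) ∘ₗ (WithLp.linearEquiv 2 ℝ (ι → ℝ)).toLinearMap
  set D : (ι → ℝ) →ₗ[ℝ] EuclideanSpace ℝ ι :=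
    (WithLp.linearEquiv 2 ℝ (ι → ℝ)).symm.toLinearMap ∘ₗ LinearMap.mulLeft ℝ (scale M w) ∘ₗ
      M.mulVecLin
  have hC : ∀ x, C x = scale M w * x.ofLp := fun _ => rfl
  have hD : ∀ z i, D z i = scale M w i * (M *ᵥ z) i := fun _ _ => rfl
  have hq : ∀ x z, M.toBilin' x z = x ⬝ᵥ M *ᵥ z := toBilin'_apply' M
  have hinner : ∀ x z, inner ℝ x (D z) = ∑ i, x i * (scale M w i * (M *ᵥ z) i) := fun x z => by
    simp [PiLp.inner_apply, hD, mul_comm]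
  have key := bilin_self_nonpos_of_orthogonal_eigenvectors (C := C) (D := D) (y := y)
    (isSymm_toBilin'_iff_isSymm.2 h.isSymm)
    (fun x z => by
      rw [hinner, hq, hC]
      exact Finset.sum_congr rfl fun i _ => by simp only [Pi.mul_apply]; ring)
    (fun z => by
      simpa only [hq, EuclideanSpace.norm_sq_eq, hD, Real.norm_eq_abs, sq_abs]
        using h.dotProduct_mulVec_le z)
    (fun x μ hμ hx => by
      rw [hinner]
      exact h.sum_mul_scale_mul_mulVec_eq_zero hμ
        (fun i => congrFun (congrArg WithLp.ofLp hx) i) hy)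
  rw [hq] at key
  exact ⟨key.1, fun h0 i => by rw [← hD, key.2 h0]; rfl⟩

theorem isHyperbolicAt (h : IsLocallyHyperbolic M w A m) : IsHyperbolicAt M w := by
  refine .of_nonpos_on_ker h.isSymm (dotProductBilin ℝ ℝ w ∘ₗ M.mulVecLin)
    (fun y hy => (h.nonpos_of_dotProduct_eq_zero hy).1) ?_
  exact Finset.sum_nonneg fun i _ => h.degree_nonneg i

lemma link_eq_zero_of_eq_zero (h : IsLocallyHyperbolic M w A m) {z : ι → ℝ}
    (hwz : w ⬝ᵥ M *ᵥ z = 0) (hzz : z ⬝ᵥ M *ᵥ z = 0) {i : ι} (hi : w i ≠ 0) :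
    w ⬝ᵥ A i *ᵥ z = 0 ∧ z ⬝ᵥ A i *ᵥ z = 0 := by
  have hscale := (h.nonpos_of_dotProduct_eq_zero hwz).2 hzz
  have hterm : ∀ j, w j * (z ⬝ᵥ A j *ᵥ z) ≤ 0 := fun j => by
    simpa [hscale] using h.link_le z j
  have hsum : ∑ j, w j * (z ⬝ᵥ A j *ᵥ z) = 0 := by rw [h.sum_link, hzz, mul_zero]
  rw [Finset.sum_eq_zero_iff_of_nonpos fun j _ => hterm j] at hsum
  refine ⟨?_, (mul_eq_zero.1 (hsum i (Finset.mem_univ i))).resolve_left hi⟩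
  by_cases hMw : (M *ᵥ w) i = 0
  · rw [h.link_eq_zero i hi hMw, zero_mulVec, dotProduct_zero]
  · have hs : scale M w i ≠ 0 := div_ne_zero hi fun h0 =>
      mul_ne_zero hi hMw ((Real.sqrt_eq_zero (h.degree_nonneg i)).1 h0)
    rw [h.weight_link i hi, (mul_eq_zero.1 (hscale i)).resolve_left hs, mul_zero]

theorem link_isTightAt (h : IsLocallyHyperbolic M w A m) (hw : 0 < w ⬝ᵥ M *ᵥ w) {y : ι → ℝ}
    (hy : IsTightAt M w y) {i : ι} (hi : w i ≠ 0) : IsTightAt (A i) w y := by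
  unfold IsTightAt at *
  set t := (w ⬝ᵥ M *ᵥ y) / (w ⬝ᵥ M *ᵥ w) with ht
  set z := y + (-t) • w with hz
  have hwz : w ⬝ᵥ M *ᵥ z = 0 := by
    simp only [hz, mulVec_add, mulVec_smul, dotProduct_add, dotProduct_smul, smul_eq_mul, ht]
    field_simp
    ring
  have hzz : z ⬝ᵥ M *ᵥ z = 0 := by
    rw [hz, dotProduct_mulVec_add_smul h.isSymm, ht]
    field_simp
    linear_combination hy
  obtain ⟨hwAz, hzAz⟩ := h.link_eq_zero_of_eq_zero hwz hzz hi
  have hyz : y = z + t • w := by simp [hz]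
  have hwAy : w ⬝ᵥ A i *ᵥ y = t * (w ⬝ᵥ A i *ᵥ w) := by
    rw [hyz, mulVec_add, mulVec_smul, dotProduct_add, dotProduct_smul, hwAz, zero_add, smul_eq_mul]
  have hyAy : y ⬝ᵥ A i *ᵥ y = t ^ 2 * (w ⬝ᵥ A i *ᵥ w) := by
    rw [hyz, dotProduct_mulVec_add_smul (h.link_isSymm i), hwAz, hzAz]
    ring
  rw [hwAy, hyAy]
  ring

end IsLocallyHyperbolic

end LocalToGlobal

section IndepFamily

open Finset

variable {α : Type*} [DecidableEq α] {𝒜 : Finset (Finset α)} {s t : Finset α} {a b : α} {m : ℕ}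

/-- The independent sets of a matroid, as a finite family. The empty family is allowed, so that
the link of every element is again of this kind. -/
structure IsIndepFamily (𝒜 : Finset (Finset α)) : Prop where
  isLowerSet : IsLowerSet (𝒜 : Set (Finset α))
  exists_insert_mem : ∀ ⦃s⦄, s ∈ 𝒜 → ∀ ⦃t⦄, t ∈ 𝒜 → #s < #t → ∃ a ∈ t, a ∉ s ∧ insert a s ∈ 𝒜

lemma memberSubfamily_comm (𝒜 : Finset (Finset α)) (a b : α) :
    (𝒜.memberSubfamily a).memberSubfamily b = (𝒜.memberSubfamily b).memberSubfamily a := by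
  ext s
  simp only [mem_memberSubfamily, mem_insert, insert_comm a b]
  tauto

lemma memberSubfamily_eq_empty (h : IsLowerSet (𝒜 : Set (Finset α))) (ha : {a} ∉ 𝒜) :
    𝒜.memberSubfamily a = ∅ :=
  eq_empty_of_forall_notMem fun s hs =>
    ha (h (singleton_subset_iff.2 (mem_insert_self a s)) (mem_memberSubfamily.1 hs).1)

lemma card_slice_memberSubfamily (𝒜 : Finset (Finset α)) (a : α) (m : ℕ) :
    #((𝒜.memberSubfamily a).slice m) = #{s ∈ 𝒜.slice (m + 1) | a ∈ s} := by
  refine card_nbij' (insert a) (fun s => s.erase a) ?_ ?_ ?_ ?_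
  all_goals simp only [Set.MapsTo, Set.LeftInvOn, coe_filter, mem_slice, mem_memberSubfamily,
    Set.mem_ofPred_eq, mem_coe]
  · rintro s ⟨⟨hs, has⟩, rfl⟩
    exact ⟨⟨hs, card_insert_of_notMem has⟩, mem_insert_self a s⟩
  · rintro s ⟨⟨hs, hcard⟩, has⟩
    exact ⟨⟨by rwa [insert_erase has], notMem_erase a s⟩, by rw [card_erase_of_mem has, hcard]; rfl⟩
  · rintro s ⟨⟨-, has⟩, -⟩
    exact erase_insert has
  · rintro s ⟨-, has⟩
    exact insert_erase has

lemma sum_card_slice_memberSubfamily [Fintype α] (𝒜 : Finset (Finset α)) (m : ℕ) :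
    ∑ a, #((𝒜.memberSubfamily a).slice m) = (m + 1) * #(𝒜.slice (m + 1)) := by
  simp only [card_slice_memberSubfamily]
  have hcount := sum_card_bipartiteAbove_eq_sum_card_bipartiteBelow (s := univ)
    (t := 𝒜.slice (m + 1)) (fun (a : α) s => a ∈ s)
  simp only [bipartiteAbove, bipartiteBelow, filter_univ_mem] at hcount
  rw [hcount, sum_const_nat fun s hs => (mem_slice.1 hs).2, mul_comm]

namespace IsIndepFamily

lemma memberSubfamily (h : IsIndepFamily 𝒜) (a : α) : IsIndepFamily (𝒜.memberSubfamily a) where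
  isLowerSet := h.isLowerSet.memberSubfamily
  exists_insert_mem := by
    simp only [mem_memberSubfamily]
    rintro s ⟨hs, has⟩ t ⟨ht, hat⟩ hst
    obtain ⟨b, hbt, hbs, hb⟩ := h.exists_insert_mem hs ht (by
      rwa [card_insert_of_notMem has, card_insert_of_notMem hat, add_lt_add_iff_right])
    have hba : b ≠ a := fun hba => hbs (hba ▸ mem_insert_self a s)
    refine ⟨b, mem_of_mem_insert_of_ne hbt hba, fun hmem => hbs (mem_insert_of_mem hmem), ?_, ?_⟩
    · rwa [insert_comm]
    · simp [hba.symm, has]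

lemma exists_superset_mem_slice (h : IsIndepFamily 𝒜) (hs : s ∈ 𝒜) (hm : (𝒜.slice m).Nonempty)
    (hsm : #s ≤ m) : ∃ t ∈ 𝒜.slice m, s ⊆ t := by
  induction m, hsm using Nat.le_induction with
  | base => exact ⟨s, mem_slice.2 ⟨hs, rfl⟩, subset_rfl⟩
  | succ m _ ih =>
    obtain ⟨u, hu⟩ := hm
    obtain ⟨hu, hum⟩ := mem_slice.1 hu
    obtain ⟨v, hvu, hv⟩ := exists_subset_card_eq (show m ≤ #u by lia)
    obtain ⟨t, ht, hst⟩ := ih ⟨v, mem_slice.2 ⟨h.isLowerSet hvu hu, hv⟩⟩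
    obtain ⟨ht, htm⟩ := mem_slice.1 ht
    obtain ⟨a, -, hat, ha⟩ := h.exists_insert_mem ht hu (by lia)
    exact ⟨insert a t, mem_slice.2 ⟨ha, by rw [card_insert_of_notMem hat, htm]⟩,
      hst.trans (subset_insert a t)⟩

lemma slice_memberSubfamily_nonempty (h : IsIndepFamily 𝒜) (ha : {a} ∈ 𝒜)
    (hm : (𝒜.slice (m + 1)).Nonempty) : ((𝒜.memberSubfamily a).slice m).Nonempty := by
  obtain ⟨t, ht, hat⟩ := h.exists_superset_mem_slice ha hm (by simp)
  rw [← card_pos, card_slice_memberSubfamily, card_pos]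
  exact ⟨t, mem_filter.2 ⟨ht, singleton_subset_iff.1 hat⟩⟩

lemma slice_memberSubfamily_memberSubfamily_nonempty (h : IsIndepFamily 𝒜) (hab : a ≠ b)
    (h2 : {a, b} ∈ 𝒜) (hm : (𝒜.slice (m + 2)).Nonempty) :
    (((𝒜.memberSubfamily a).memberSubfamily b).slice m).Nonempty :=
  (h.memberSubfamily a).slice_memberSubfamily_nonempty
    (mem_memberSubfamily.2 ⟨h2, by simpa using hab⟩)
    (h.slice_memberSubfamily_nonempty (h.isLowerSet (by simp) h2) hm)

lemma exists_pair_mem_pair_mem (h : IsIndepFamily 𝒜) (ha : {a} ∈ 𝒜) (hb : {b} ∈ 𝒜) (hab : a ≠ b)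
    (h2 : {a, b} ∉ 𝒜) (hm : (𝒜.slice 2).Nonempty) :
    ∃ x, x ≠ a ∧ x ≠ b ∧ {a, x} ∈ 𝒜 ∧ {x, b} ∈ 𝒜 := by
  obtain ⟨t, ht, hat⟩ := h.exists_superset_mem_slice ha hm (by simp)
  obtain ⟨ht, htcard⟩ := mem_slice.1 ht
  obtain ⟨x, hx, rfl⟩ : ∃ x, a ≠ x ∧ t = {a, x} := by
    obtain ⟨y, z, hyz, rfl⟩ := card_eq_two.1 htcard
    rcases mem_insert.1 (singleton_subset_iff.1 hat) with rfl | haz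
    · exact ⟨z, hyz, rfl⟩
    · rw [mem_singleton.1 haz]
      exact ⟨y, hyz.symm, pair_comm y z⟩
  obtain ⟨y, hy, hyb, hyb2⟩ := h.exists_insert_mem hb ht (by simp [htcard])
  rcases mem_insert.1 hy with rfl | hyx
  · exact absurd hyb2 h2
  · obtain rfl := mem_singleton.1 hyx
    exact ⟨y, hx.symm, by simpa using hyb, ht, hyb2⟩

end IsIndepFamily

variable [Fintype α]

/-- The link of `s`, i.e. the independent sets of the contraction by `s` when `𝒜` is the family of
independent sets of a matroid. -/
def link (𝒜 : Finset (Finset α)) (s : Finset α) : Finset (Finset α) :=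
  {t | Disjoint s t ∧ s ∪ t ∈ 𝒜}

@[simp]
lemma mem_link : t ∈ link 𝒜 s ↔ Disjoint s t ∧ s ∪ t ∈ 𝒜 := by simp [link]

@[simp]
lemma link_empty : link 𝒜 ∅ = 𝒜 := by ext; simp

lemma link_memberSubfamily (ha : a ∉ s) : link (𝒜.memberSubfamily a) s = link 𝒜 (insert a s) := by
  ext t
  simp only [mem_link, mem_memberSubfamily, mem_union, insert_union, disjoint_insert_left, ha,
    false_or]
  tauto

lemma forall_link_memberSubfamily {P : Finset (Finset α) → Prop}
    (h : ∀ s ∈ 𝒜.slice (m + 1), P (link 𝒜 s)) (a : α) :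
    ∀ s ∈ (𝒜.memberSubfamily a).slice m, P (link (𝒜.memberSubfamily a) s) := by
  intro s hs
  obtain ⟨hs, hcard⟩ := mem_slice.1 hs
  obtain ⟨hs, has⟩ := mem_memberSubfamily.1 hs
  rw [link_memberSubfamily has]
  exact h _ (mem_slice.2 ⟨hs, by rw [card_insert_of_notMem has, hcard]⟩)

lemma isLowerSet_link (h : IsLowerSet (𝒜 : Set (Finset α))) (s : Finset α) :
    IsLowerSet (link 𝒜 s : Set (Finset α)) := by
  intro t u hut ht
  obtain ⟨hdisj, hmem⟩ := mem_link.1 ht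
  exact mem_link.2 ⟨hdisj.mono_right hut, h (union_subset_union_right hut) hmem⟩

end IndepFamily

section LevelMatrix

open Finset

variable {α : Type*}

/-- The indicator vector of the elements in `Option α`. -/
def elementWeight : Option α → ℝ := fun o => o.elim 0 1

lemma elementWeight_dotProduct [Fintype α] (y : Option α → ℝ) :
    elementWeight ⬝ᵥ y = ∑ a, y (some a) := by
  simp [dotProduct, Fintype.sum_option, elementWeight]

variable [DecidableEq α]

/-- The link of an optional element: `none` stands for the empty set. -/
def optionLink (𝒜 : Finset (Finset α)) (o : Option α) : Finset (Finset α) :=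
  o.elim 𝒜 𝒜.memberSubfamily

/-- The matrix counting the `m`-element faces of the links of pairs of optional elements; the
corner entry is multiplied by the constant `c` that the log-concavity inequality will carry. -/
def levelMatrix (c : ℝ) (m : ℕ) (𝒜 : Finset (Finset α)) : Matrix (Option α) (Option α) ℝ :=
  of fun o p => (if o = none ∧ p = none then c else 1) * #((optionLink (optionLink 𝒜 o) p).slice m)

lemma optionLink_comm (𝒜 : Finset (Finset α)) (o p : Option α) :
    optionLink (optionLink 𝒜 o) p = optionLink (optionLink 𝒜 p) o := by
  cases o <;> cases p <;> first | rfl | exact memberSubfamily_comm 𝒜 _ _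

lemma levelMatrix_isSymm (c : ℝ) (m : ℕ) (𝒜 : Finset (Finset α)) : (levelMatrix c m 𝒜).IsSymm :=
  IsSymm.ext fun o p => by simp only [levelMatrix, of_apply, optionLink_comm 𝒜 p o, and_comm]

lemma levelMatrix_empty (c : ℝ) (m : ℕ) : levelMatrix c m (∅ : Finset (Finset α)) = 0 := by
  have hempty : ∀ o : Option α, optionLink ∅ o = ∅ := by
    intro o
    cases o <;> simp [optionLink, Finset.memberSubfamily]
  ext o p
  simp [levelMatrix, hempty, slice]

lemma levelMatrix_some_some (c : ℝ) (m : ℕ) (𝒜 : Finset (Finset α)) (a b : α) :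
    levelMatrix c m 𝒜 (some a) (some b) =
      #(((𝒜.memberSubfamily a).memberSubfamily b).slice m) := by
  simp [levelMatrix, optionLink]

variable [Fintype α]

lemma sum_levelMatrix_memberSubfamily (c : ℝ) (m : ℕ) (𝒜 : Finset (Finset α)) :
    ∑ a, levelMatrix c m (𝒜.memberSubfamily a) = (m + 1 : ℝ) • levelMatrix c (m + 1) 𝒜 := by
  ext o p
  have hcomm : ∀ a, optionLink (optionLink (𝒜.memberSubfamily a) o) p =
      (optionLink (optionLink 𝒜 o) p).memberSubfamily a := fun a => by
    rw [show 𝒜.memberSubfamily a = optionLink 𝒜 (some a) from rfl, optionLink_comm 𝒜,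
      optionLink_comm (optionLink 𝒜 o)]
    rfl
  simp only [Matrix.sum_apply, Matrix.smul_apply, smul_eq_mul, levelMatrix, of_apply, hcomm,
    ← mul_sum]
  rw_mod_cast [sum_card_slice_memberSubfamily]
  push_cast
  ring

lemma sum_levelMatrix_some (c : ℝ) (m : ℕ) (𝒜 : Finset (Finset α)) (a : α) (o : Option α) :
    ∑ b, levelMatrix c m (𝒜.memberSubfamily a) (some b) o =
      (m + 1) * levelMatrix c (m + 1) 𝒜 (some a) o := by
  have hsum := congrFun₂ (sum_levelMatrix_memberSubfamily c m 𝒜) (some a) o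
  simp only [Matrix.sum_apply, Matrix.smul_apply, smul_eq_mul] at hsum
  rw [← hsum]
  refine sum_congr rfl fun b _ => ?_
  simp [levelMatrix, optionLink, memberSubfamily_comm 𝒜 a b]

lemma sum_levelMatrix_some_none (c : ℝ) (m : ℕ) (𝒜 : Finset (Finset α)) :
    ∑ a, levelMatrix c m 𝒜 (some a) none = (m + 1) * #(𝒜.slice (m + 1)) := by
  simp only [levelMatrix, of_apply, optionLink, Option.elim, reduceCtorEq, false_and, if_false,
    one_mul]
  exact_mod_cast sum_card_slice_memberSubfamily 𝒜 m

lemma sum_levelMatrix_some_some (c : ℝ) (m : ℕ) (𝒜 : Finset (Finset α)) (a : α) :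
    ∑ b, levelMatrix c m 𝒜 (some a) (some b) =
      (m + 1) * #((𝒜.memberSubfamily a).slice (m + 1)) := by
  simp only [levelMatrix_some_some]
  exact_mod_cast sum_card_slice_memberSubfamily (𝒜.memberSubfamily a) m

lemma levelMatrix_mulVec_elementWeight (c : ℝ) (m : ℕ) (𝒜 : Finset (Finset α)) (a : α) :
    (levelMatrix c m 𝒜 *ᵥ elementWeight) (some a) =
      (m + 1) * #((𝒜.memberSubfamily a).slice (m + 1)) := by
  rw [mulVec, dotProduct_comm, elementWeight_dotProduct, sum_levelMatrix_some_some]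

lemma elementWeight_dotProduct_levelMatrix_mulVec (c : ℝ) (m : ℕ) (𝒜 : Finset (Finset α)) :
    elementWeight ⬝ᵥ levelMatrix c m 𝒜 *ᵥ elementWeight =
      (m + 1) * ((m + 2) * #(𝒜.slice (m + 2))) := by
  rw [elementWeight_dotProduct]
  simp only [levelMatrix_mulVec_elementWeight, ← mul_sum]
  rw_mod_cast [sum_card_slice_memberSubfamily]

lemma elementWeight_dotProduct_levelMatrix_mulVec_single (c : ℝ) (m : ℕ) (𝒜 : Finset (Finset α)) :
    elementWeight ⬝ᵥ levelMatrix c m 𝒜 *ᵥ Pi.single none 1 = (m + 1) * #(𝒜.slice (m + 1)) := by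
  rw [elementWeight_dotProduct]
  simp only [mulVec_single_one, col_apply, sum_levelMatrix_some_none]

lemma single_dotProduct_levelMatrix_mulVec_single (c : ℝ) (m : ℕ) (𝒜 : Finset (Finset α)) :
    Pi.single none 1 ⬝ᵥ levelMatrix c m 𝒜 *ᵥ Pi.single none 1 = c * #(𝒜.slice m) := by
  simp [levelMatrix, optionLink]

end LevelMatrix

section Trickle

open Finset

variable {α : Type*} [DecidableEq α] {c : ℝ} {m : ℕ} {𝒜 : Finset (Finset α)}

lemma conductance_levelMatrix_ne_zero (h : IsIndepFamily 𝒜) (hm : (𝒜.slice (m + 2)).Nonempty)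
    {a b : α} (hab : a ≠ b) (h2 : {a, b} ∈ 𝒜) :
    conductance (levelMatrix c m 𝒜) elementWeight (some a) (some b) ≠ 0 := by
  simpa [conductance, elementWeight, levelMatrix_some_some] using
    (h.slice_memberSubfamily_memberSubfamily_nonempty hab h2 hm).ne_empty

lemma reflTransGen_conductance_levelMatrix (h : IsIndepFamily 𝒜)
    (hm : (𝒜.slice (m + 2)).Nonempty) {a b : α} (ha : {a} ∈ 𝒜) (hb : {b} ∈ 𝒜) :
    Relation.ReflTransGen
      (fun o p => conductance (levelMatrix c m 𝒜) elementWeight o p ≠ 0) (some a) (some b) := by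
  rcases eq_or_ne a b with rfl | hab
  · exact .refl
  by_cases h2 : {a, b} ∈ 𝒜
  · exact .single (conductance_levelMatrix_ne_zero h hm hab h2)
  have hslice : (𝒜.slice 2).Nonempty := by
    obtain ⟨t, ht⟩ := hm
    obtain ⟨ht, htcard⟩ := mem_slice.1 ht
    obtain ⟨u, hut, hu⟩ := exists_subset_card_eq (show 2 ≤ #t by lia)
    exact ⟨u, mem_slice.2 ⟨h.isLowerSet hut ht, hu⟩⟩
  obtain ⟨x, hxa, hxb, hax, hxb2⟩ := h.exists_pair_mem_pair_mem ha hb hab h2 hslice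
  exact .tail (.single (conductance_levelMatrix_ne_zero h hm hxa.symm hax))
    (conductance_levelMatrix_ne_zero h hm hxb hxb2)

variable [Fintype α]

lemma singleton_mem_of_degree_ne_zero (h : IsLowerSet (𝒜 : Set (Finset α))) {o : Option α}
    (ho : elementWeight o * (levelMatrix c m 𝒜 *ᵥ elementWeight) o ≠ 0) :
    ∃ a, o = some a ∧ {a} ∈ 𝒜 := by
  rcases o with _ | a
  · simp [elementWeight] at ho
  · refine ⟨a, rfl, ?_⟩
    by_contra ha
    simp [levelMatrix_mulVec_elementWeight, memberSubfamily_eq_empty h ha, slice] at ho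

lemma isLocallyHyperbolic_levelMatrix (hc : 0 ≤ c) (h : IsIndepFamily 𝒜)
    (hm : (𝒜.slice (m + 3)).Nonempty)
    (hlink : ∀ a, {a} ∈ 𝒜 → IsHyperbolicAt (levelMatrix c m (𝒜.memberSubfamily a)) elementWeight) :
    IsLocallyHyperbolic (levelMatrix c (m + 1) 𝒜) elementWeight
      (fun o => levelMatrix c m (optionLink 𝒜 o)) (m + 1) where
  isSymm := levelMatrix_isSymm _ _ _
  nonneg o p := by
    simp only [levelMatrix, of_apply]
    split_ifs <;> positivity
  weight_nonneg o := by cases o <;> simp [elementWeight]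
  link_isSymm o := levelMatrix_isSymm _ _ _
  factor_pos := by positivity
  sum_link y := by
    rw [Fintype.sum_option]
    simp only [elementWeight, Option.elim, zero_mul, zero_add, Pi.one_apply, one_mul]
    rw [← smul_eq_mul, ← dotProduct_smul, ← smul_mulVec, ← sum_levelMatrix_memberSubfamily,
      sum_mulVec, dotProduct_sum]
    rfl
  weight_link o ho y := by
    rcases o with _ | a
    · simp [elementWeight] at ho
    rw [elementWeight_dotProduct]
    simp only [mulVec, dotProduct, mul_sum, ← mul_assoc, ← sum_levelMatrix_some, sum_mul]
    exact sum_comm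
  link_hyperbolic o ho := by
    rcases o with _ | a
    · simp [elementWeight] at ho
    by_cases ha : {a} ∈ 𝒜
    · exact hlink a ha
    · intro y
      simp [optionLink, memberSubfamily_eq_empty h.isLowerSet ha, levelMatrix_empty]
  link_eq_zero o ho hdeg := by
    rcases o with _ | a
    · simp [elementWeight] at ho
    by_cases ha : {a} ∈ 𝒜
    · have := (h.slice_memberSubfamily_nonempty ha hm).card_pos
      rw [levelMatrix_mulVec_elementWeight] at hdeg
      exact absurd hdeg (by positivity)
    · simp [optionLink, memberSubfamily_eq_empty h.isLowerSet ha, levelMatrix_empty]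
  connected o p ho hp := by
    obtain ⟨a, rfl, ha⟩ := singleton_mem_of_degree_ne_zero h.isLowerSet ho
    obtain ⟨b, rfl, hb⟩ := singleton_mem_of_degree_ne_zero h.isLowerSet hp
    exact reflTransGen_conductance_levelMatrix h hm ha hb

theorem isHyperbolicAt_levelMatrix (hc : 0 ≤ c) (h : IsIndepFamily 𝒜)
    (hm : (𝒜.slice (m + 2)).Nonempty)
    (hlink : ∀ s ∈ 𝒜.slice m, IsHyperbolicAt (levelMatrix c 0 (link 𝒜 s)) elementWeight) :
    IsHyperbolicAt (levelMatrix c m 𝒜) elementWeight := by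
  induction m generalizing 𝒜 with
  | zero =>
    obtain ⟨t, ht⟩ := hm
    simpa using hlink ∅ (mem_slice.2 ⟨h.isLowerSet (empty_subset t) (mem_slice.1 ht).1, rfl⟩)
  | succ m ih =>
    refine (isLocallyHyperbolic_levelMatrix hc h hm fun a ha => ?_).isHyperbolicAt
    exact ih (h.memberSubfamily a) (h.slice_memberSubfamily_nonempty ha hm)
      (forall_link_memberSubfamily
        (P := fun ℬ => IsHyperbolicAt (levelMatrix c 0 ℬ) elementWeight) hlink a)

theorem isTightAt_levelMatrix_link (hc : 0 ≤ c) (h : IsIndepFamily 𝒜)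
    (hm : (𝒜.slice (m + 2)).Nonempty)
    (hlink : ∀ s ∈ 𝒜.slice m, IsHyperbolicAt (levelMatrix c 0 (link 𝒜 s)) elementWeight)
    {y : Option α → ℝ} (hy : IsTightAt (levelMatrix c m 𝒜) elementWeight y) {s : Finset α}
    (hs : s ∈ 𝒜.slice m) : IsTightAt (levelMatrix c 0 (link 𝒜 s)) elementWeight y := by
  induction m generalizing 𝒜 s with
  | zero =>
    rw [card_eq_zero.1 (mem_slice.1 hs).2]
    simpa using hy
  | succ m ih =>
    obtain ⟨hs𝒜, hcard⟩ := mem_slice.1 hs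
    obtain ⟨a, has⟩ := card_pos.1 (by lia : 0 < #s)
    have ha : {a} ∈ 𝒜 := h.isLowerSet (singleton_subset_iff.2 has) hs𝒜
    have hpos : 0 < elementWeight ⬝ᵥ levelMatrix c (m + 1) 𝒜 *ᵥ elementWeight := by
      have := hm.card_pos
      rw [elementWeight_dotProduct_levelMatrix_mulVec]
      positivity
    have hlocal := isLocallyHyperbolic_levelMatrix hc h hm fun b hb =>
      isHyperbolicAt_levelMatrix hc (h.memberSubfamily b)
        (h.slice_memberSubfamily_nonempty hb hm)
        (forall_link_memberSubfamily
          (P := fun ℬ => IsHyperbolicAt (levelMatrix c 0 ℬ) elementWeight) hlink b)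
    have htight := hlocal.link_isTightAt hpos hy (i := some a) (by simp [elementWeight])
    rw [← insert_erase has, ← link_memberSubfamily (notMem_erase a s)]
    refine ih (h.memberSubfamily a) (h.slice_memberSubfamily_nonempty ha hm)
      (forall_link_memberSubfamily
        (P := fun ℬ => IsHyperbolicAt (levelMatrix c 0 ℬ) elementWeight) hlink a) htight ?_
    rw [mem_slice, mem_memberSubfamily, insert_erase has, card_erase_of_mem has, hcard]
    exact ⟨⟨hs𝒜, notMem_erase a s⟩, rfl⟩

end Trickle

section ParallelColoring

open Finset

lemma sum_sum_ite_eq_sum_sq {α κ : Type*} [DecidableEq κ] {s : Finset α} {T : Finset κ}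
    {f : α → κ} (hf : ∀ a ∈ s, f a ∈ T) (z : α → ℝ) :
    ∑ a ∈ s, ∑ b ∈ s, (if f a = f b then z a * z b else 0) =
      ∑ t ∈ T, (∑ a ∈ s with f a = t, z a) ^ 2 := by
  rw [← sum_fiberwise_of_maps_to hf]
  refine sum_congr rfl fun t _ => ?_
  rw [sq, sum_mul_sum]
  refine sum_congr rfl fun a ha => ?_
  rw [sum_filter, (mem_filter.1 ha).2]
  simp only [eq_comm]

lemma card_mul_eq_sum_of_sq_sum_eq {κ : Type*} {T : Finset κ} {n : κ → ℝ}
    (hn : (∑ t ∈ T, n t) ^ 2 = #T * ∑ t ∈ T, n t ^ 2) {t : κ} (ht : t ∈ T) :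
    #T * n t = ∑ u ∈ T, n u := by
  set σ := ∑ u ∈ T, n u with hσ
  have hvariance : ∑ u ∈ T, (#T * n u - σ) ^ 2 = 0 := by
    simp only [sub_sq, mul_pow, sum_add_distrib, sum_sub_distrib, ← mul_sum, ← sum_mul, mul_assoc,
      sum_const, nsmul_eq_mul]
    rw [← hσ]
    linear_combination -(#T : ℝ) * hn
  have := (sum_eq_zero_iff_of_nonneg fun u _ => sq_nonneg (#T * n u - σ)).1 hvariance t ht
  exact sub_eq_zero.1 (pow_eq_zero_iff two_ne_zero |>.1 this)

variable {α κ : Type*} [DecidableEq α]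

/-- A colouring `f` with palette `T` of the points of the simplicial complex `𝒞`, the colour classes
being the parallel classes: two points span an edge exactly when their colours differ. -/
structure IsParallelColoring (𝒞 : Finset (Finset α)) (f : α → κ) (T : Finset κ) : Prop where
  empty_mem : ∅ ∈ 𝒞
  isLowerSet : IsLowerSet (𝒞 : Set (Finset α))
  color_mem : ∀ ⦃a⦄, {a} ∈ 𝒞 → f a ∈ T
  pair_mem_iff : ∀ ⦃a b⦄, {a} ∈ 𝒞 → {b} ∈ 𝒞 → (a ≠ b ∧ {a, b} ∈ 𝒞 ↔ f a ≠ f b)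

lemma card_slice_zero (𝒞 : Finset (Finset α)) : #(𝒞.slice 0) = if ∅ ∈ 𝒞 then 1 else 0 := by
  split_ifs with h
  · refine card_eq_one.2 ⟨∅, ?_⟩
    ext s
    simp only [mem_slice, card_eq_zero, mem_singleton]
    exact ⟨And.right, fun hs => ⟨hs ▸ h, hs⟩⟩
  · refine card_eq_zero.2 (eq_empty_of_forall_notMem fun s hs => h ?_)
    obtain ⟨hs, hcard⟩ := mem_slice.1 hs
    rwa [card_eq_zero.1 hcard] at hs

lemma IsParallelColoring.levelMatrix_none_none {𝒞 : Finset (Finset α)} {f : α → κ} {T : Finset κ}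
    (h : IsParallelColoring 𝒞 f T) (c : ℝ) : levelMatrix c 0 𝒞 none none = c := by
  simp [levelMatrix, optionLink, card_slice_zero, h.empty_mem]

variable [Fintype α]

/-- The points of a simplicial complex. -/
def points (𝒞 : Finset (Finset α)) : Finset α := {a | {a} ∈ 𝒞}

lemma levelMatrix_zero_some_none (c : ℝ) (𝒞 : Finset (Finset α)) (a : α) :
    levelMatrix c 0 𝒞 (some a) none = if a ∈ points 𝒞 then 1 else 0 := by
  simp [levelMatrix, optionLink, card_slice_zero, mem_memberSubfamily, points]

namespace IsParallelColoring

variable {𝒞 : Finset (Finset α)} {f : α → κ} {T : Finset κ} {c : ℝ}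

lemma color_mem_of_mem_points (h : IsParallelColoring 𝒞 f T) {a : α} (ha : a ∈ points 𝒞) :
    f a ∈ T :=
  h.color_mem (by simpa [points] using ha)

variable [DecidableEq κ]

lemma levelMatrix_some_some (h : IsParallelColoring 𝒞 f T) (c : ℝ) (a b : α) :
    levelMatrix c 0 𝒞 (some a) (some b) =
      if a ∈ points 𝒞 then if b ∈ points 𝒞 then if f a = f b then 0 else 1 else 0 else 0 := by
  simp only [_root_.levelMatrix_some_some, card_slice_zero, mem_memberSubfamily, points, mem_filter,
    mem_univ, true_and, insert_empty_eq, notMem_empty, not_false_eq_true, and_true, mem_singleton]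
  by_cases ha : {a} ∈ 𝒞
  · by_cases hb : {b} ∈ 𝒞
    · have := h.pair_mem_iff ha hb
      simp only [ha, hb]
      push_cast
      grind
    · have : {a, b} ∉ 𝒞 := fun h2 => hb (h.isLowerSet (by simp) h2)
      simp [hb, this]
  · have : {a, b} ∉ 𝒞 := fun h2 => ha (h.isLowerSet (by simp) h2)
    simp [ha, this]

lemma sum_mul_levelMatrix_some_some (h : IsParallelColoring 𝒞 f T) (c : ℝ) (z : α → ℝ) :
    ∑ a, ∑ b, z a * (levelMatrix c 0 𝒞 (some a) (some b) * z b) =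
      (∑ a ∈ points 𝒞, z a) ^ 2 - ∑ t ∈ T, (∑ a ∈ points 𝒞 with f a = t, z a) ^ 2 := by
  rw [← sum_sum_ite_eq_sum_sq fun _ => h.color_mem_of_mem_points, eq_sub_iff_add_eq, sq,
    sum_mul_sum]
  simp only [h.levelMatrix_some_some, ite_mul, zero_mul, mul_ite, mul_zero, one_mul,
    sum_ite_irrel, sum_const_zero, sum_ite_mem, univ_inter, ← sum_add_distrib]
  refine sum_congr rfl fun a _ => sum_congr rfl fun b _ => ?_
  split_ifs <;> simp

lemma dotProduct_levelMatrix_mulVec (h : IsParallelColoring 𝒞 f T) (c : ℝ) (y : Option α → ℝ) :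
    y ⬝ᵥ levelMatrix c 0 𝒞 *ᵥ y =
      c * y none ^ 2 + 2 * y none * ∑ a ∈ points 𝒞, y (some a) +
        ((∑ a ∈ points 𝒞, y (some a)) ^ 2 -
          ∑ t ∈ T, (∑ a ∈ points 𝒞 with f a = t, y (some a)) ^ 2) := by
  rw [← h.sum_mul_levelMatrix_some_some c fun a => y (some a)]
  simp only [dotProduct, mulVec, Fintype.sum_option, h.levelMatrix_none_none,
    levelMatrix_zero_some_none, (levelMatrix_isSymm c 0 𝒞).apply (some _) none, mul_add,
    sum_add_distrib, mul_sum, ite_mul, one_mul, zero_mul, mul_ite, mul_zero, sum_ite_mem,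
    univ_inter]
  rw [sq, add_assoc, add_assoc]
  congr 1
  · ring
  rw [← add_assoc, ← sum_add_distrib]
  congr 1
  exact sum_congr rfl fun a _ => by ring

omit [DecidableEq κ] in
/-- Completing the square in the coordinate `none` leaves `(∑ t, u t) ^ 2 / #T - ∑ t, u t ^ 2`,
where `u t` is the sum of `y` over the colour class `t`. -/
theorem isHyperbolicAt_levelMatrix (h : IsParallelColoring 𝒞 f T) (hT : 2 ≤ #T)
    (hc : c * (#T - 1) = #T) : IsHyperbolicAt (levelMatrix c 0 𝒞) elementWeight := by
  have hT' : (2 : ℝ) ≤ #T := by exact_mod_cast hT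
  refine .of_nonpos_on_ker (levelMatrix_isSymm c 0 𝒞)
    (c • LinearMap.proj none + ∑ a ∈ points 𝒞, LinearMap.proj (some a)) (fun y hy => ?_) ?_
  · simp only [LinearMap.add_apply, LinearMap.smul_apply, LinearMap.proj_apply, smul_eq_mul,
      LinearMap.sum_apply] at hy
    have hcauchy := sq_sum_le_card_mul_sum_sq (s := T)
      (f := fun t => ∑ a ∈ points 𝒞 with f a = t, y (some a))
    rw [sum_fiberwise_of_maps_to fun a => h.color_mem_of_mem_points] at hcauchy
    rw [h.dotProduct_levelMatrix_mulVec]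
    rw [eq_neg_of_add_eq_zero_right hy] at hcauchy ⊢
    have : (#T : ℝ) * (c - 1) = c := by linarith
    have : (#T : ℝ) * (c ^ 2 - c) = c ^ 2 := by linear_combination c * this
    refine nonpos_of_mul_nonpos_right ?_ (by linarith : (0 : ℝ) < #T)
    nlinarith
  · rw [elementWeight_dotProduct_levelMatrix_mulVec]
    positivity

lemma sum_card_filter (h : IsParallelColoring 𝒞 f T) :
    ∑ t ∈ T, #{a ∈ points 𝒞 | f a = t} = #(points 𝒞) :=
  (card_eq_sum_card_fiberwise fun _ => h.color_mem_of_mem_points).symm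

theorem card_filter_eq_of_isTightAt (h : IsParallelColoring 𝒞 f T) (hT : 2 ≤ #T)
    (hc : c * (#T - 1) = #T)
    (htight : IsTightAt (levelMatrix c 0 𝒞) elementWeight (Pi.single none 1)) {t u : κ}
    (ht : t ∈ T) (hu : u ∈ T) : #{a ∈ points 𝒞 | f a = t} = #{a ∈ points 𝒞 | f a = u} := by
  have hT' : (2 : ℝ) ≤ #T := by exact_mod_cast hT
  have hsum : ∑ t ∈ T, (#{a ∈ points 𝒞 | f a = t} : ℝ) = #(points 𝒞) := by
    exact_mod_cast h.sum_card_filter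
  have hww : elementWeight ⬝ᵥ levelMatrix c 0 𝒞 *ᵥ elementWeight =
      (#(points 𝒞) : ℝ) ^ 2 - ∑ t ∈ T, (#{a ∈ points 𝒞 | f a = t} : ℝ) ^ 2 := by
    rw [h.dotProduct_levelMatrix_mulVec]
    simp [elementWeight]
  have hwe : elementWeight ⬝ᵥ levelMatrix c 0 𝒞 *ᵥ Pi.single none 1 = #(points 𝒞) := by
    rw [elementWeight_dotProduct]
    simp [levelMatrix_zero_some_none]
  have hee : Pi.single none 1 ⬝ᵥ levelMatrix c 0 𝒞 *ᵥ Pi.single none 1 = c := by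
    simp [h.levelMatrix_none_none]
  rw [IsTightAt, hww, hwe, hee, ← hsum] at htight
  have hcauchy : (∑ t ∈ T, (#{a ∈ points 𝒞 | f a = t} : ℝ)) ^ 2 =
      #T * ∑ t ∈ T, (#{a ∈ points 𝒞 | f a = t} : ℝ) ^ 2 := by
    linear_combination (#T - 1 : ℝ) * htight -
      ((∑ t ∈ T, (#{a ∈ points 𝒞 | f a = t} : ℝ)) ^ 2 -
        ∑ t ∈ T, (#{a ∈ points 𝒞 | f a = t} : ℝ) ^ 2) * hc
  have hequal := (card_mul_eq_sum_of_sq_sum_eq hcauchy ht).trans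
    (card_mul_eq_sum_of_sq_sum_eq hcauchy hu).symm
  exact_mod_cast mul_left_cancel₀ (by positivity) hequal

end IsParallelColoring

end ParallelColoring

section LogConcavity

open Finset

variable {α : Type*} [DecidableEq α] [Fintype α] {𝒜 : Finset (Finset α)} {m p : ℕ}
  {κ : Finset α → Type*} {f : ∀ s, α → κ s} {T : ∀ s, Finset (κ s)}

lemma one_add_one_div_mul_sub_one (hp : 2 ≤ p) : (1 + 1 / ((p : ℝ) - 1)) * (p - 1) = p := by
  have : (2 : ℝ) ≤ p := by exact_mod_cast hp
  have : (p : ℝ) - 1 ≠ 0 := by linarith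
  field_simp
  ring

lemma one_add_one_div_sub_one_nonneg (hp : 2 ≤ p) : 0 ≤ 1 + 1 / ((p : ℝ) - 1) := by
  have : (2 : ℝ) ≤ p := by exact_mod_cast hp
  have : 0 ≤ (p : ℝ) - 1 := by linarith
  positivity

lemma elementWeight_mul_single_levelMatrix (c : ℝ) (m : ℕ) (𝒜 : Finset (Finset α)) :
    (elementWeight ⬝ᵥ levelMatrix c m 𝒜 *ᵥ elementWeight) *
        (Pi.single none 1 ⬝ᵥ levelMatrix c m 𝒜 *ᵥ Pi.single none 1) =
      (m + 1) ^ 2 * ((1 + 1 / ((m : ℝ) + 1)) * c * #(𝒜.slice m) * #(𝒜.slice (m + 2))) := by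
  rw [elementWeight_dotProduct_levelMatrix_mulVec, single_dotProduct_levelMatrix_mulVec_single]
  field_simp
  ring

namespace IsIndepFamily

theorem mul_card_slice_mul_card_slice_le (h : IsIndepFamily 𝒜) (hp : 2 ≤ p)
    (hcol : ∀ s ∈ 𝒜.slice m, IsParallelColoring (link 𝒜 s) (f s) (T s))
    (hT : ∀ s ∈ 𝒜.slice m, #(T s) = p) :
    (1 + 1 / ((m : ℝ) + 1)) * (1 + 1 / ((p : ℝ) - 1)) * #(𝒜.slice m) * #(𝒜.slice (m + 2)) ≤
      (#(𝒜.slice (m + 1)) : ℝ) ^ 2 := by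
  rcases (𝒜.slice (m + 2)).eq_empty_or_nonempty with hempty | hm
  · simp [hempty]
  have hhyp := isHyperbolicAt_levelMatrix (one_add_one_div_sub_one_nonneg hp) h hm
    (fun s hs => (hcol s hs).isHyperbolicAt_levelMatrix (by rwa [hT s hs])
      (by rw [hT s hs, one_add_one_div_mul_sub_one hp])) (Pi.single none 1)
  rw [elementWeight_mul_single_levelMatrix, elementWeight_dotProduct_levelMatrix_mulVec_single,
    mul_pow] at hhyp
  exact le_of_mul_le_mul_left hhyp (by positivity)

theorem card_filter_link_eq_of_mul_card_slice_eq [∀ s, DecidableEq (κ s)] (h : IsIndepFamily 𝒜)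
    (hp : 2 ≤ p) (hcol : ∀ s ∈ 𝒜.slice m, IsParallelColoring (link 𝒜 s) (f s) (T s))
    (hT : ∀ s ∈ 𝒜.slice m, #(T s) = p) (hm : (𝒜.slice (m + 1)).Nonempty)
    (heq : (1 + 1 / ((m : ℝ) + 1)) * (1 + 1 / ((p : ℝ) - 1)) * #(𝒜.slice m) * #(𝒜.slice (m + 2)) =
      (#(𝒜.slice (m + 1)) : ℝ) ^ 2) {s : Finset α} (hs : s ∈ 𝒜.slice m) {t u : κ s}
    (ht : t ∈ T s) (hu : u ∈ T s) :
    #{a ∈ points (link 𝒜 s) | f s a = t} = #{a ∈ points (link 𝒜 s) | f s a = u} := by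
  have hm2 : (𝒜.slice (m + 2)).Nonempty := by
    by_contra! hempty
    rw [hempty, card_empty, Nat.cast_zero, mul_zero] at heq
    exact hm.card_ne_zero (by simpa using heq.symm)
  have hc : ∀ s ∈ 𝒜.slice m, (1 + 1 / ((p : ℝ) - 1)) * (#(T s) - 1) = #(T s) := fun s hs => by
    rw [hT s hs, one_add_one_div_mul_sub_one hp]
  have hT2 : ∀ s ∈ 𝒜.slice m, 2 ≤ #(T s) := fun s hs => by rwa [hT s hs]
  have htight : IsTightAt (levelMatrix (1 + 1 / ((p : ℝ) - 1)) m 𝒜) elementWeight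
      (Pi.single none 1) := by
    rw [IsTightAt, elementWeight_mul_single_levelMatrix, heq,
      elementWeight_dotProduct_levelMatrix_mulVec_single, mul_pow]
  refine (hcol s hs).card_filter_eq_of_isTightAt (hT2 s hs) (hc s hs) ?_ ht hu
  exact isTightAt_levelMatrix_link (one_add_one_div_sub_one_nonneg hp) h hm2
    (fun s hs => (hcol s hs).isHyperbolicAt_levelMatrix (hT2 s hs) (hc s hs)) htight hs

end IsIndepFamily

end LogConcavity

section Components

open Finset

variable {V : Type*}

/-- The connected component of a vertex in the graph with edge set `F`. -/
def componentOf (F : Finset (Sym2 V)) (x : V) :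
    (SimpleGraph.fromEdgeSet (F : Set (Sym2 V))).ConnectedComponent :=
  (SimpleGraph.fromEdgeSet (F : Set (Sym2 V))).connectedComponentMk x

/-- The image of an edge in the contraction by `F`, whose vertices are the components of `F`. -/
def edgeClass (F : Finset (Sym2 V)) :
    Sym2 V → Sym2 (SimpleGraph.fromEdgeSet (F : Set (Sym2 V))).ConnectedComponent :=
  Sym2.map (componentOf F)

@[simp]
lemma edgeClass_mk (F : Finset (Sym2 V)) (x y : V) :
    edgeClass F s(x, y) = s(componentOf F x, componentOf F y) := rfl

lemma componentOf_surjective (F : Finset (Sym2 V)) : Function.Surjective (componentOf F) :=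
  Quot.mk_surjective

lemma componentOf_eq_iff {F : Finset (Sym2 V)} {x y : V} :
    componentOf F x = componentOf F y ↔
      (SimpleGraph.fromEdgeSet (F : Set (Sym2 V))).Reachable x y :=
  SimpleGraph.ConnectedComponent.eq

lemma componentOf_eq_of_mem {F : Finset (Sym2 V)} {u v : V} (h : s(u, v) ∈ F) :
    componentOf F u = componentOf F v := by
  rcases eq_or_ne u v with rfl | huv
  · rfl
  · exact componentOf_eq_iff.2 (SimpleGraph.Adj.reachable (by simp [h, huv]))

lemma componentOf_eq_of_subset {F F' : Finset (Sym2 V)} (hF : F ⊆ F') {x y : V}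
    (h : componentOf F x = componentOf F y) : componentOf F' x = componentOf F' y := by
  rw [componentOf_eq_iff] at h ⊢
  exact h.mono (SimpleGraph.fromEdgeSet_mono (coe_subset.2 hF))

lemma componentOf_eq_of_forall_edge {F F' : Finset (Sym2 V)}
    (h : ∀ e ∈ F', (edgeClass F e).IsDiag) {x y : V} (hxy : componentOf F' x = componentOf F' y) :
    componentOf F x = componentOf F y := by
  obtain ⟨p⟩ := componentOf_eq_iff.1 hxy
  induction p with
  | nil => rfl
  | cons hadj p ih =>
    have := h _ ((SimpleGraph.fromEdgeSet_adj _).1 hadj).1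
    rw [edgeClass_mk, Sym2.mk_isDiag_iff] at this
    exact this.trans (ih (componentOf_eq_iff.2 ⟨p⟩))

variable [DecidableEq V]

lemma componentOf_insert_eq_iff {F : Finset (Sym2 V)} {u v x y : V} :
    componentOf (insert s(u, v) F) x = componentOf (insert s(u, v) F) y ↔
      componentOf F x = componentOf F y ∨
        s(componentOf F x, componentOf F y) = s(componentOf F u, componentOf F v) := by
  simp only [Sym2.eq_iff]
  constructor
  · intro h
    obtain ⟨p⟩ := componentOf_eq_iff.1 h
    induction p with
    | nil => exact .inl rfl
    | @cons x z y hadj p ih =>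
      have ih := ih (componentOf_eq_iff.2 ⟨p⟩)
      have hmem := ((SimpleGraph.fromEdgeSet_adj _).1 hadj).1
      rw [mem_coe, mem_insert, Sym2.eq_iff] at hmem
      rcases hmem with (⟨rfl, rfl⟩ | ⟨rfl, rfl⟩) | hmem
      · grind
      · grind
      · rwa [componentOf_eq_of_mem hmem]
  · have huv : componentOf (insert s(u, v) F) u = componentOf (insert s(u, v) F) v :=
      componentOf_eq_of_mem (mem_insert_self _ _)
    have hmono : ∀ {x y}, componentOf F x = componentOf F y →
        componentOf (insert s(u, v) F) x = componentOf (insert s(u, v) F) y :=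
      componentOf_eq_of_subset (subset_insert _ _)
    rintro (h | ⟨hx, hy⟩ | ⟨hx, hy⟩)
    · exact hmono h
    · rw [hmono hx, hmono hy, huv]
    · rw [hmono hx, hmono hy, huv]

variable [Fintype V]

lemma card_component_le_of_forall_edge {F F' : Finset (Sym2 V)}
    (h : ∀ e ∈ F', (edgeClass F e).IsDiag) :
    Fintype.card (SimpleGraph.fromEdgeSet (F : Set (Sym2 V))).ConnectedComponent ≤
      Fintype.card (SimpleGraph.fromEdgeSet (F' : Set (Sym2 V))).ConnectedComponent := by
  refine Fintype.card_le_of_surjective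
    (Quot.lift (componentOf F) fun x y hxy =>
      componentOf_eq_of_forall_edge h (componentOf_eq_iff.2 hxy)) fun c => ?_
  obtain ⟨x, rfl⟩ := componentOf_surjective F c
  exact ⟨componentOf F' x, rfl⟩

lemma card_component_insert {F : Finset (Sym2 V)} {e : Sym2 V} (he : ¬(edgeClass F e).IsDiag) :
    Fintype.card
        (SimpleGraph.fromEdgeSet ((insert e F : Finset _) : Set (Sym2 V))).ConnectedComponent + 1 =
      Fintype.card (SimpleGraph.fromEdgeSet (F : Set (Sym2 V))).ConnectedComponent := by
  obtain ⟨u, v⟩ := e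
  change ¬(edgeClass F s(u, v)).IsDiag at he
  rw [edgeClass_mk, Sym2.mk_isDiag_iff] at he
  let g : (SimpleGraph.fromEdgeSet (F : Set (Sym2 V))).ConnectedComponent →
      (SimpleGraph.fromEdgeSet ((insert s(u, v) F : Finset _) : Set (Sym2 V))).ConnectedComponent :=
    Quot.lift (componentOf (insert s(u, v) F)) fun x y hxy =>
      componentOf_eq_of_subset (subset_insert _ _) (componentOf_eq_iff.2 hxy)
  have hg : ∀ x, g (componentOf F x) = componentOf (insert s(u, v) F) x := fun _ => rfl
  have hbij : Function.Bijective fun c : {c // c ≠ componentOf F v} => g c := by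
    refine ⟨?_, fun d => ?_⟩
    · rintro ⟨c, hc⟩ ⟨d, hd⟩ hcd
      obtain ⟨x, rfl⟩ := componentOf_surjective F c
      obtain ⟨y, rfl⟩ := componentOf_surjective F d
      simp only [hg, componentOf_insert_eq_iff, Sym2.eq_iff] at hcd
      simp only [Subtype.mk.injEq]
      tauto
    · obtain ⟨x, rfl⟩ := componentOf_surjective _ d
      by_cases hx : componentOf F x = componentOf F v
      · refine ⟨⟨componentOf F u, he⟩, ?_⟩
        simp only [hg, componentOf_insert_eq_iff, Sym2.eq_iff]
        tauto
      · exact ⟨⟨componentOf F x, hx⟩, rfl⟩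
  have hpos := Fintype.card_pos_iff.2 ⟨componentOf F v⟩
  rw [← Fintype.card_of_bijective hbij, Fintype.card_subtype_compl, Fintype.card_subtype_eq]
  lia

end Components

section Forests

open Finset

variable {V : Type*} [Fintype V] {G : SimpleGraph V} {S : Finset (Sym2 V)} {a b : Sym2 V}
  {k : ℕ}

/-- The edge sets of the spanning forests of `G`. -/
def forests (G : SimpleGraph V) : Finset (Finset (Sym2 V)) :=
  {F | (F : Set (Sym2 V)) ⊆ G.edgeSet ∧ (SimpleGraph.fromEdgeSet (F : Set (Sym2 V))).IsAcyclic}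

lemma mem_forests : S ∈ forests G ↔ (S : Set (Sym2 V)) ⊆ G.edgeSet ∧
    (SimpleGraph.fromEdgeSet (S : Set (Sym2 V))).IsAcyclic := by
  simp [forests]

lemma isLowerSet_forests (G : SimpleGraph V) : IsLowerSet (forests G : Set (Finset (Sym2 V))) := by
  intro F F' hle hF
  rw [mem_coe, mem_forests] at hF ⊢
  exact ⟨(coe_subset.2 hle).trans hF.1,
    hF.2.anti (SimpleGraph.fromEdgeSet_mono (coe_subset.2 hle))⟩

variable [DecidableEq V]

lemma numForests_eq_card_slice (G : SimpleGraph V) (k : ℕ) :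
    numForests V G k = #((forests G).slice k) := by
  refine congrArg card (Finset.ext fun F => ?_)
  simp only [mem_filter, mem_univ, true_and, mem_slice, mem_forests]
  tauto

lemma notMem_and_insert_mem_forests_iff (hS : S ∈ forests G) :
    a ∉ S ∧ insert a S ∈ forests G ↔ a ∈ G.edgeSet ∧ ¬(edgeClass S a).IsDiag := by
  induction a with
  | _ u v =>
  have hsup : SimpleGraph.fromEdgeSet ((insert s(u, v) S : Finset (Sym2 V)) : Set (Sym2 V)) =
      SimpleGraph.fromEdgeSet (S : Set (Sym2 V)) ⊔ SimpleGraph.edge u v := by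
    rw [coe_insert, Set.insert_eq, SimpleGraph.fromEdgeSet_union, sup_comm]
    rfl
  rw [mem_forests] at hS
  rw [edgeClass_mk, Sym2.mk_isDiag_iff, mem_forests, hsup,
    SimpleGraph.isAcyclic_sup_fromEdgeSet_iff, ← componentOf_eq_iff, coe_insert,
    Set.insert_subset_iff]
  constructor
  · rintro ⟨huvS, ⟨huv, -⟩, -, hcycle⟩
    refine ⟨huv, fun h => ?_⟩
    rcases hcycle h with heq | hadj
    · exact G.ne_of_adj huv heq
    · exact huvS ((SimpleGraph.fromEdgeSet_adj _).1 hadj).1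
  · rintro ⟨huv, hne⟩
    exact ⟨fun h => hne (componentOf_eq_of_mem h), ⟨huv, hS.1⟩, hS.2, fun h => absurd h hne⟩

lemma card_component_add_card (hS : S ∈ forests G) :
    Fintype.card (SimpleGraph.fromEdgeSet (S : Set (Sym2 V))).ConnectedComponent + #S =
      Fintype.card V := by
  induction S using Finset.induction_on with
  | empty =>
    rw [card_empty, add_zero]
    refine (Fintype.card_of_bijective (f := componentOf (∅ : Finset (Sym2 V)))
      ⟨fun x y hxy => ?_, componentOf_surjective _⟩).symm
    simpa [componentOf_eq_iff] using hxy
  | insert e S he ih =>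
    have hS' := isLowerSet_forests G (subset_insert e S) hS
    have hinsert := card_component_insert ((notMem_and_insert_mem_forests_iff hS').1 ⟨he, hS⟩).2
    rw [card_insert_of_notMem he]
    have := ih hS'
    lia

lemma isIndepFamily_forests (G : SimpleGraph V) : IsIndepFamily (forests G) where
  isLowerSet := isLowerSet_forests G
  exists_insert_mem S hS T hT hST := by
    by_contra! hmax
    have hdiag : ∀ e ∈ T, (edgeClass S e).IsDiag := by
      intro e he
      by_contra hne
      obtain ⟨heS, hins⟩ :=
        (notMem_and_insert_mem_forests_iff hS).2 ⟨(mem_forests.1 hT).1 he, hne⟩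
      exact hmax e he heS hins
    have := card_component_le_of_forall_edge hdiag
    have := card_component_add_card hS
    have := card_component_add_card hT
    lia

lemma numForests_ne_zero_of_connected (hG : G.Connected) (hk : k < Fintype.card V) :
    numForests V G k ≠ 0 := by
  obtain ⟨T, hTG, hT⟩ := hG.exists_isTree_le
  obtain ⟨F, hFT, hF⟩ := exists_subset_card_eq (show k ≤ #T.edgeFinset by
    have := hT.card_edgeFinset
    lia)
  have hmem : T.edgeFinset ∈ forests G := by
    rw [mem_forests, SimpleGraph.coe_edgeFinset, SimpleGraph.fromEdgeSet_edgeSet]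
    exact ⟨SimpleGraph.edgeSet_mono hTG, hT.isAcyclic⟩
  rw [numForests_eq_card_slice, card_ne_zero]
  exact ⟨F, mem_slice.2 ⟨isLowerSet_forests G hFT hmem, hF⟩⟩

lemma singleton_mem_link_forests_iff (hS : S ∈ forests G) :
    {a} ∈ link (forests G) S ↔ a ∈ G.edgeSet ∧ ¬(edgeClass S a).IsDiag := by
  rw [← notMem_and_insert_mem_forests_iff hS, mem_link, disjoint_singleton_right, union_comm,
    ← insert_eq]

lemma pair_mem_link_forests_iff (hS : S ∈ forests G) (ha : {a} ∈ link (forests G) S)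
    (hb : {b} ∈ link (forests G) S) :
    a ≠ b ∧ {a, b} ∈ link (forests G) S ↔ edgeClass S a ≠ edgeClass S b := by
  have hbS := (notMem_and_insert_mem_forests_iff hS).2 ((singleton_mem_link_forests_iff hS).1 hb)
  have haG := (singleton_mem_link_forests_iff hS).1 ha
  have haS := ((notMem_and_insert_mem_forests_iff hS).2 haG).1
  have hinsert := notMem_and_insert_mem_forests_iff (a := a) hbS.2
  have hclass : (edgeClass (insert b S) a).IsDiag ↔ edgeClass S a = edgeClass S b := by
    induction a with | _ x y
    induction b with | _ u v
    have := haG.2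
    rw [edgeClass_mk, Sym2.mk_isDiag_iff] at this ⊢
    rw [componentOf_insert_eq_iff]
    simp [this]
  rw [ne_eq (edgeClass S a), ← hclass, ← and_iff_right haG.1 (b := ¬_), ← hinsert, mem_link,
    mem_insert, not_or, disjoint_insert_right, disjoint_singleton_right, union_comm, insert_union,
    ← insert_eq]
  simp [haS, hbS.1]

theorem isParallelColoring_forests (hS : S ∈ forests G) :
    IsParallelColoring (link (forests G) S) (edgeClass S) ({t | ¬t.IsDiag} : Finset (Sym2 _)) where
  empty_mem := by simpa using hS
  isLowerSet := isLowerSet_link (isLowerSet_forests G) S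
  color_mem a ha := by simpa using ((singleton_mem_link_forests_iff hS).1 ha).2
  pair_mem_iff _ _ ha hb := pair_mem_link_forests_iff hS ha hb

lemma card_filter_not_isDiag (hS : S ∈ (forests G).slice k) :
    #{t : Sym2 (SimpleGraph.fromEdgeSet (S : Set (Sym2 V))).ConnectedComponent | ¬t.IsDiag} =
      (Fintype.card V - k).choose 2 := by
  obtain ⟨hmem, rfl⟩ := mem_slice.1 hS
  rw [← Fintype.card_subtype, Sym2.card_subtype_not_diag, ← card_component_add_card hmem,
    Nat.add_sub_cancel]

end Forests

section Multiplicity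

open Finset

/-- The contraction of the multigraph with edge multiplicities `μ` along `p` and `q` is a nonzero
multiple of a complete graph. -/
def HasUniformContraction {κ : Type*} (μ : Sym2 κ → ℕ) (p q : κ) : Prop :=
  ∃ M ≠ 0, (∀ r s, r ≠ s → r ≠ p → r ≠ q → s ≠ p → s ≠ q → μ s(r, s) = M) ∧
    ∀ r, r ≠ p → r ≠ q → μ s(r, p) + μ s(r, q) = M

/-- Contracting an edge makes the multiplicities among three further vertices nonzero, so those
edges can be contracted too, and the resulting equations are incompatible. -/
theorem exists_not_hasUniformContraction {κ : Type*} [Fintype κ] (hκ : 5 ≤ Fintype.card κ)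
    {μ : Sym2 κ → ℕ} {p q : κ} (hpq : p ≠ q) (hμ : μ s(p, q) ≠ 0) :
    ∃ r s, r ≠ s ∧ μ s(r, s) ≠ 0 ∧ ¬HasUniformContraction μ r s := by
  by_contra! huniform
  obtain ⟨a, b, c, ha, hb, hc, hab, hac, hbc⟩ : ∃ a b c, a ∈ ({p, q} : Finset κ)ᶜ ∧
      b ∈ ({p, q} : Finset κ)ᶜ ∧ c ∈ ({p, q} : Finset κ)ᶜ ∧ a ≠ b ∧ a ≠ c ∧ b ≠ c := by
    refine two_lt_card_iff.1 ?_
    rw [card_compl, card_pair hpq]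
    lia
  simp only [mem_compl, mem_insert, mem_singleton, not_or] at ha hb hc
  obtain ⟨M, hM, hfar, -⟩ := huniform p q hpq hμ
  have hμac : μ s(a, c) = M := hfar a c hac ha.1 ha.2 hc.1 hc.2
  have hμbc : μ s(b, c) = M := hfar b c hbc hb.1 hb.2 hc.1 hc.2
  have hμab : μ s(a, b) = M := hfar a b hab ha.1 ha.2 hb.1 hb.2
  obtain ⟨Mac, -, hfar_ac, hnear_ac⟩ := huniform a c hac (by rwa [hμac])
  obtain ⟨Mbc, -, hfar_bc, -⟩ := huniform b c hbc (by rwa [hμbc])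
  obtain ⟨Mab, -, hfar_ab, -⟩ := huniform a b hab (by rwa [hμab])
  have hpa : μ s(p, a) = μ s(p, q) :=
    (hfar_bc p a (Ne.symm ha.1) (Ne.symm hb.1) (Ne.symm hc.1) hab hac).trans
      (hfar_bc p q hpq (Ne.symm hb.1) (Ne.symm hc.1) (Ne.symm hb.2) (Ne.symm hc.2)).symm
  have hpc : μ s(p, c) = μ s(p, q) :=
    (hfar_ab p c (Ne.symm hc.1) (Ne.symm ha.1) (Ne.symm hb.1) hac.symm hbc.symm).trans
      (hfar_ab p q hpq (Ne.symm ha.1) (Ne.symm hb.1) (Ne.symm ha.2) (Ne.symm hb.2)).symm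
  have hsum : μ s(p, a) + μ s(p, c) = μ s(p, q) :=
    (hnear_ac p (Ne.symm ha.1) (Ne.symm hc.1)).trans
      (hfar_ac p q hpq (Ne.symm ha.1) (Ne.symm hc.1) (Ne.symm ha.2) (Ne.symm hc.2)).symm
  lia

variable {V : Type*} [Fintype V] {G : SimpleGraph V} {S F : Finset (Sym2 V)}

/-- The number of edges of `G` that become the edge `t` in the contraction by `S`. -/
def edgeMultiplicity (G : SimpleGraph V) (S : Finset (Sym2 V))
    (t : Sym2 (SimpleGraph.fromEdgeSet (S : Set (Sym2 V))).ConnectedComponent) : ℕ :=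
  #{e : Sym2 V | e ∈ G.edgeSet ∧ edgeClass S e = t}

lemma exists_of_edgeMultiplicity_ne_zero
    {t : Sym2 (SimpleGraph.fromEdgeSet (S : Set (Sym2 V))).ConnectedComponent}
    (h : edgeMultiplicity G S t ≠ 0) : ∃ e ∈ G.edgeSet, edgeClass S e = t := by
  obtain ⟨e, he⟩ := card_ne_zero.1 h
  exact ⟨e, (mem_filter.1 he).2⟩

lemma card_filter_points_link_forests [DecidableEq V] (hS : S ∈ forests G)
    {t : Sym2 (SimpleGraph.fromEdgeSet (S : Set (Sym2 V))).ConnectedComponent} (ht : ¬t.IsDiag) :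
    #{a ∈ points (link (forests G) S) | edgeClass S a = t} = edgeMultiplicity G S t := by
  rw [edgeMultiplicity, points, filter_filter]
  refine congrArg card (filter_congr fun a _ => ?_)
  rw [singleton_mem_link_forests_iff hS, and_assoc]
  exact and_congr_right fun _ => and_iff_right_of_imp fun h => h ▸ ht

lemma exists_edgeMultiplicity_ne_zero (hS : S ∈ forests G) (hF : F ∈ forests G) (hSF : #S < #F) :
    ∃ t, ¬t.IsDiag ∧ edgeMultiplicity G S t ≠ 0 := by
  obtain ⟨e, -, heS, he⟩ := (isIndepFamily_forests G).exists_insert_mem hS hF hSF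
  obtain ⟨heG, hdiag⟩ := (notMem_and_insert_mem_forests_iff hS).1 ⟨heS, he⟩
  exact ⟨_, hdiag, card_ne_zero.2 ⟨e, mem_filter.2 ⟨mem_univ e, heG, rfl⟩⟩⟩

lemma edgeMultiplicity_insert_of_ne [DecidableEq V] {u v x y : V}
    (hxu : componentOf S x ≠ componentOf S u)
    (hxv : componentOf S x ≠ componentOf S v) (hyu : componentOf S y ≠ componentOf S u)
    (hyv : componentOf S y ≠ componentOf S v) :
    edgeMultiplicity G (insert s(u, v) S) s(componentOf _ x, componentOf _ y) =
      edgeMultiplicity G S s(componentOf S x, componentOf S y) := by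
  refine congrArg card (filter_congr fun e _ => and_congr_right fun _ => ?_)
  induction e
  simp only [edgeClass_mk, Sym2.eq_iff, componentOf_insert_eq_iff]
  tauto

lemma edgeMultiplicity_insert_eq_add [DecidableEq V] {u v x : V}
    (hxu : componentOf S x ≠ componentOf S u)
    (hxv : componentOf S x ≠ componentOf S v) (huv : componentOf S u ≠ componentOf S v) :
    edgeMultiplicity G (insert s(u, v) S) s(componentOf _ x, componentOf _ u) =
      edgeMultiplicity G S s(componentOf S x, componentOf S u) +
        edgeMultiplicity G S s(componentOf S x, componentOf S v) := by
  rw [edgeMultiplicity, edgeMultiplicity, edgeMultiplicity, ← card_union_of_disjoint, ← filter_or]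
  · refine congrArg card (filter_congr fun e _ => ?_)
    rw [← and_or_left]
    refine and_congr_right fun _ => ?_
    induction e
    simp only [edgeClass_mk, Sym2.eq_iff, componentOf_insert_eq_iff]
    grind
  · rw [disjoint_filter]
    rintro e - ⟨-, heu⟩ ⟨-, hev⟩
    rw [heu, Sym2.eq_iff] at hev
    grind

lemma hasUniformContraction_edgeMultiplicity (hS : S ∈ forests G) (hF : F ∈ forests G)
    (hSF : #S + 1 < #F)
    (huniform : ∀ S' ∈ (forests G).slice (#S + 1), ∀ t u, ¬t.IsDiag → ¬u.IsDiag →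
      edgeMultiplicity G S' t = edgeMultiplicity G S' u)
    {p q : (SimpleGraph.fromEdgeSet (S : Set (Sym2 V))).ConnectedComponent} (hpq : p ≠ q)
    (hmult : edgeMultiplicity G S s(p, q) ≠ 0) :
    HasUniformContraction (edgeMultiplicity G S) p q := by
  obtain ⟨u, v, rfl, rfl, huvG⟩ :
      ∃ u v, componentOf S u = p ∧ componentOf S v = q ∧ s(u, v) ∈ G.edgeSet := by
    obtain ⟨e, heG, he⟩ := exists_of_edgeMultiplicity_ne_zero hmult
    induction e with | _ x y
    rcases Sym2.eq_iff.1 he with ⟨hx, hy⟩ | ⟨hx, hy⟩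
    · exact ⟨x, y, hx, hy, heG⟩
    · exact ⟨y, x, hy, hx, Sym2.eq_swap ▸ heG⟩
  obtain ⟨huvS, hinsert⟩ := (notMem_and_insert_mem_forests_iff hS).2 ⟨huvG, by simpa using hpq⟩
  have hcard : #(insert s(u, v) S) = #S + 1 := card_insert_of_notMem huvS
  have huniform := huniform _ (mem_slice.2 ⟨hinsert, hcard⟩)
  obtain ⟨t, ht, htM⟩ := exists_edgeMultiplicity_ne_zero hinsert hF (by rwa [hcard])
  refine ⟨_, htM, fun r s hrs hru hrv hsu hsv => ?_, fun r hru hrv => ?_⟩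
  · obtain ⟨x, rfl⟩ := componentOf_surjective S r
    obtain ⟨y, rfl⟩ := componentOf_surjective S s
    rw [← edgeMultiplicity_insert_of_ne hru hrv hsu hsv]
    refine huniform _ _ ?_ ht
    rw [Sym2.mk_isDiag_iff, componentOf_insert_eq_iff, Sym2.eq_iff]
    tauto
  · obtain ⟨x, rfl⟩ := componentOf_surjective S r
    rw [← edgeMultiplicity_insert_eq_add hru hrv hpq]
    refine huniform _ _ ?_ ht
    rw [Sym2.mk_isDiag_iff, componentOf_insert_eq_iff, Sym2.eq_iff]
    tauto

theorem exists_edgeMultiplicity_ne {m : ℕ} (hm : m + 5 ≤ Fintype.card V)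
    (hne : ((forests G).slice (m + 2)).Nonempty) :
    ∃ S ∈ (forests G).slice (m + 1), ∃ t u, ¬t.IsDiag ∧ ¬u.IsDiag ∧
      edgeMultiplicity G S t ≠ edgeMultiplicity G S u := by
  by_contra! huniform
  obtain ⟨F, hFslice⟩ := hne
  obtain ⟨hF, hFcard⟩ := mem_slice.1 hFslice
  obtain ⟨S, hSF, rfl⟩ := exists_subset_card_eq (show m ≤ #F by lia)
  have hS : S ∈ forests G := isLowerSet_forests G hSF hF
  obtain ⟨t, ht, htM⟩ := exists_edgeMultiplicity_ne_zero hS hF (by lia)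
  induction t with | _ p q
  obtain ⟨r, s, hrs, hrsM, hnot⟩ := exists_not_hasUniformContraction
    (by have := card_component_add_card hS; lia) (by simpa using ht) htM
  exact hnot (hasUniformContraction_edgeMultiplicity hS hF (by lia) huniform hrs hrsM)

end Multiplicity

theorem graphical_matroid_binomial_log_concavity_general
    (V : Type*) [Fintype V] [DecidableEq V] (G : SimpleGraph V)
    (k : ℕ) (hk1 : 1 ≤ k) (hk2 : k ≤ Fintype.card V - 2) :
    ((1 : ℝ) + 1 / (k : ℝ)) *
          (1 + 1 / ((Nat.choose (Fintype.card V - k + 1) 2 : ℝ) - 1)) *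
          (numForests V G (k - 1) : ℝ) * (numForests V G (k + 1) : ℝ) ≤
        (numForests V G k : ℝ) ^ 2 ∧
      (1 < k → k < Fintype.card V - 2 → numForests V G k ≠ 0 →
        ((1 : ℝ) + 1 / (k : ℝ)) *
            (1 + 1 / ((Nat.choose (Fintype.card V - k + 1) 2 : ℝ) - 1)) *
            (numForests V G (k - 1) : ℝ) * (numForests V G (k + 1) : ℝ) <
          (numForests V G k : ℝ) ^ 2) := by
  obtain ⟨m, rfl⟩ : ∃ m, k = m + 1 := ⟨k - 1, by lia⟩
  rw [show Fintype.card V - (m + 1) + 1 = Fintype.card V - m by lia, Nat.add_sub_cancel]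
  simp only [numForests_eq_card_slice, Nat.cast_add_one, add_assoc, Nat.reduceAdd]
  have hp : 2 ≤ (Fintype.card V - m).choose 2 :=
    le_trans (by decide) (Nat.choose_le_choose 2 (show 3 ≤ Fintype.card V - m by lia))
  have hcol : ∀ S ∈ (forests G).slice m, _ := fun S hS =>
    isParallelColoring_forests (Finset.mem_slice.1 hS).1
  have hT : ∀ S ∈ (forests G).slice m, _ := fun S hS => card_filter_not_isDiag hS
  have hle := (isIndepFamily_forests G).mul_card_slice_mul_card_slice_le hp hcol hT
  refine ⟨hle, fun hm hmV hne => lt_of_le_of_ne hle fun heq => ?_⟩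
  obtain ⟨j, rfl⟩ : ∃ j, m = j + 1 := ⟨m - 1, by lia⟩
  obtain ⟨S, hS, t, u, ht, hu, htu⟩ :=
    exists_edgeMultiplicity_ne (by lia) (Finset.card_ne_zero.1 hne)
  have hforest := (Finset.mem_slice.1 hS).1
  refine htu ?_
  rw [← card_filter_points_link_forests hforest ht, ← card_filter_points_link_forests hforest hu]
  exact (isIndepFamily_forests G).card_filter_link_eq_of_mul_card_slice_eq hp hcol hT
    (Finset.card_ne_zero.1 hne) heq hS (by simpa using ht) (by simpa using hu)

/-- **Log-concavity for graphical matroids with the binomial bound.**  For a simple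
connected graph `G` on `N` vertices and `1 ≤ k ≤ N - 2`:
`I(k)² ≥ (1 + 1/k)·(1 + 1/(C(N-k+1,2) - 1))·I(k-1)·I(k+1)`, and the inequality is strict
whenever `1 < k < N - 2`. -/
theorem graphical_matroid_binomial_log_concavity
    (V : Type*) [Fintype V] [DecidableEq V] (G : SimpleGraph V)
    (hconn : G.Connected)
    (k : ℕ) (hk1 : 1 ≤ k) (hk2 : k ≤ Fintype.card V - 2) :
    ((1 : ℝ) + 1 / (k : ℝ)) *
          (1 + 1 / ((Nat.choose (Fintype.card V - k + 1) 2 : ℝ) - 1)) *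
          (numForests V G (k - 1) : ℝ) * (numForests V G (k + 1) : ℝ) ≤
        (numForests V G k : ℝ) ^ 2 ∧
      (1 < k → k < Fintype.card V - 2 →
        ((1 : ℝ) + 1 / (k : ℝ)) *
            (1 + 1 / ((Nat.choose (Fintype.card V - k + 1) 2 : ℝ) - 1)) *
            (numForests V G (k - 1) : ℝ) * (numForests V G (k + 1) : ℝ) <
          (numForests V G k : ℝ) ^ 2) :=
  have hgeneral := graphical_matroid_binomial_log_concavity_general V G k hk1 hk2
  ⟨hgeneral.1, fun hk hkV => hgeneral.2 hk hkV (numForests_ne_zero_of_connected hconn (by lia))⟩
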